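/- arXiv:1601.01629 — 2 statements merged into one kernel-verified Lean document; each statement's English description precedes it below -/
import Mathlib

section
/- Let s ≥ 1 and j ≥ 1 be integers and let q = ∏_{α ∈ (ℤ/2)^s \ {0}} (α₁u₁ + ⋯ + α_s u_s) ∈ 𝔽₂[u₁,…,u_s] be the top Dickson polynomial. Then the coefficient of the monomial u₁^j · u₂^(2j) · u₃^(4j) ⋯ u_s^(j·2^(s−1)) in the j-th power q^j equals 1 in 𝔽₂. -/
/-!
Over a finite field with `q` elements, order the monomials colexicographically, so that the leading
term of a linear form `∑ i, α i • X i` is `α t • X t`, where `t` is the largest index with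
`α t ≠ 0`. A nonzero scalar `c` and an index `t` arise in this way from exactly `q ^ k` vectors `α`,
where `k` is the number of indices below `t`. As the leading term is multiplicative, that of the top
Dickson polynomial is the product over `t` of
`(∏ c ≠ 0, c • X t) ^ q ^ k = -X t ^ ((q - 1) * q ^ k)`, by Wilson's theorem and `c ^ q = c`.
-/

open MvPolynomial Finset Function

section VectorsByLastNonzeroEntry

theorem prod_piFinset_comp_apply {ι M : Type*} {κ : ι → Type*} [Fintype ι] [DecidableEq ι]
    [CommMonoid M] (S : ∀ i, Finset (κ i)) (i : ι) (g : κ i → M) :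
    ∏ f ∈ Fintype.piFinset S, g (f i) = (∏ a ∈ S i, g a) ^ ∏ j ∈ univ.erase i, #(S j) := by
  classical
  rw [← prod_fiberwise_of_maps_to' (fun f hf => Fintype.mem_piFinset.1 hf i) g, ← prod_pow]
  refine prod_congr rfl fun a ha => ?_
  rw [prod_const, Fintype.card_filter_piFinset_eq_of_mem S i ha]

variable {σ K M : Type*} [Fintype σ] [LinearOrder σ] [Fintype K] [DecidableEq K] [Zero K]
  [CommMonoid M]

open scoped Classical in
theorem filter_isGreatest_support_eq_piFinset (t : σ) :
    univ.filter (fun α : σ → K => IsGreatest (support α) t) =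
      Fintype.piFinset fun i =>
        if i < t then univ else if i = t then univ.filter (· ≠ 0) else {0} := by
  ext α
  simp only [mem_filter_univ, Fintype.mem_piFinset, IsGreatest, mem_support, mem_upperBounds]
  constructor
  · rintro ⟨ht, hmax⟩ i
    grind
  · intro h
    refine ⟨by simpa using h t, fun i hi => ?_⟩
    have hmem := h i
    grind

open scoped Classical in
theorem prod_isGreatest_support_comp_apply (t : σ) (g : K → M) :
    ∏ α : σ → K with IsGreatest (support α) t, g (α t) =
      (∏ c with c ≠ 0, g c) ^ Fintype.card K ^ #{i | i < t} := by
  rw [filter_isGreatest_support_eq_piFinset, prod_piFinset_comp_apply]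
  simp only [lt_irrefl, if_false, if_true]
  congr 1
  calc
    _ = ∏ i ∈ univ.erase t, if i < t then Fintype.card K else 1 :=
      prod_congr rfl fun i hi => by split_ifs <;> simp_all
    _ = Fintype.card K ^ #{i | i < t} := by
      rw [prod_ite, prod_const, prod_const_one, mul_one, filter_erase,
        erase_eq_of_notMem (by simp)]

open scoped Classical in
theorem prod_ne_zero_eq_prod_isGreatest_support (f : (σ → K) → M) :
    ∏ α with α ≠ 0, f α = ∏ t, ∏ α with IsGreatest (support α) t, f α := by
  have hunion : univ.filter (fun α : σ → K => α ≠ 0) =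
      univ.biUnion fun t => univ.filter fun α => IsGreatest (support α) t := by
    ext α
    simp only [mem_biUnion, mem_filter_univ, mem_univ, true_and, ← support_nonempty_iff]
    refine ⟨fun hα => ?_, fun ⟨t, ht⟩ => ht.nonempty⟩
    exact ⟨_, by simpa using isGreatest_max' (support α).toFinset (Set.toFinset_nonempty.2 hα)⟩
  rw [hunion, prod_biUnion]
  exact fun t _ u _ htu => disjoint_filter.2 fun α _ ht hu => htu (ht.unique hu)

end VectorsByLastNonzeroEntry

theorem prod_ne_zero_eq_neg_one (K : Type*) [Field K] [Fintype K] [DecidableEq K] :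
    ∏ c : K with c ≠ 0, c = -1 := by
  rw [prod_subtype (p := fun c => c ≠ 0) _ (by simp), ← unitsEquivNeZero.prod_comp]
  simpa using congrArg Units.val (FiniteField.prod_univ_units_id_eq_neg_one (K := K))

section LeadingTerm

variable {σ R : Type*} [CommSemiring R]

/-- The leading term with respect to a monomial order as a monoid homomorphism, which makes the
generic `map_prod` and `map_pow` available for it. -/
noncomputable def leadingTermHom (m : MonomialOrder σ) (R : Type*) [CommSemiring R]
    [NoZeroDivisors R] : MvPolynomial σ R →* MvPolynomial σ R where
  toFun := m.leadingTerm
  map_one' := m.leadingTerm_C 1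
  map_mul' := m.leadingTerm_mul

theorem coeff_eq_of_leadingTerm_eq_monomial {m : MonomialOrder σ} {f : MvPolynomial σ R}
    {d : σ →₀ ℕ} {c : R} (hc : c ≠ 0) (h : m.leadingTerm f = monomial d c) : f.coeff d = c := by
  obtain ⟨hdegree, hcoeff⟩ :=
    ((monomial_eq_monomial_iff ..).1 h).resolve_right fun hzero => hc hzero.2
  rw [← hdegree]
  exact hcoeff

/-- The colexicographic order on `σ →₀ ℕ` as a monomial order: the exponents of the largest
variables are compared first, so that `X i < X j` for `i < j`. -/
noncomputable def colexMonomialOrder (σ : Type*) [LinearOrder σ] [WellFoundedLT σ] :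
    MonomialOrder σ where
  syn := Colex (σ →₀ ℕ)
  toSyn := { toEquiv := toColex, map_add' := toColex_add }
  toSyn_monotone := Finsupp.toColex_monotone

theorem monotone_colexMonomialOrder_single [LinearOrder σ] [WellFoundedLT σ] :
    Monotone fun i : σ => (colexMonomialOrder σ).toSyn (Finsupp.single i 1) :=
  Finsupp.Colex.single_strictMono.monotone

end LeadingTerm

section LinearForm

variable {σ R : Type*} [Fintype σ] [CommSemiring R]

/-- The linear form `∑ i, α i • X i` with coefficient vector `α`. -/
noncomputable def linearForm (α : σ → R) : MvPolynomial σ R :=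
  ∑ i, C (α i) * X i

theorem coeff_single_linearForm (α : σ → R) (i : σ) :
    (linearForm α).coeff (Finsupp.single i 1) = α i := by
  classical
  simp [linearForm, coeff_sum, coeff_X, Finsupp.single_left_inj]

variable [LinearOrder σ] {m : MonomialOrder σ} {α : σ → R} {t : σ}

theorem degree_linearForm (hm : Monotone fun i => m.toSyn (Finsupp.single i 1))
    (ht : IsGreatest (support α) t) : m.degree (linearForm α) = Finsupp.single t 1 := by
  refine m.toSyn.injective (le_antisymm ?_ (m.le_degree ?_))
  · refine m.degree_sum_le.trans (Finset.sup_le fun i _ => ?_)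
    rw [C_mul_X_eq_monomial]
    by_cases hi : α i = 0
    · simp [hi]
    · exact (m.degree_monomial_le (α i)).trans (hm (ht.2 hi))
  · rw [mem_support_iff, coeff_single_linearForm]
    exact ht.1

theorem leadingTerm_linearForm (hm : Monotone fun i => m.toSyn (Finsupp.single i 1))
    (ht : IsGreatest (support α) t) : m.leadingTerm (linearForm α) = C (α t) * X t := by
  rw [MonomialOrder.leadingTerm, MonomialOrder.leadingCoeff, degree_linearForm hm ht,
    coeff_single_linearForm, C_mul_X_eq_monomial]

end LinearForm

/-- The top Dickson polynomial over a finite coefficient ring `K` in variables indexed by `σ`: the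
product of all linear forms with a nonzero coefficient vector. -/
noncomputable def topDickson (σ K : Type*) [Fintype σ] [DecidableEq σ] [CommSemiring K] [Fintype K]
    [DecidableEq K] : MvPolynomial σ K :=
  ∏ α : σ → K with α ≠ 0, linearForm α

section FiniteField

variable {σ K : Type*} [Fintype σ] [LinearOrder σ] [Field K] [Fintype K] [DecidableEq K]

theorem leadingTerm_topDickson {m : MonomialOrder σ}
    (hm : Monotone fun i => m.toSyn (Finsupp.single i 1)) :
    m.leadingTerm (topDickson σ K) =
      ∏ t, -X t ^ ((Fintype.card K - 1) * Fintype.card K ^ #{i | i < t}) := by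
  classical
  calc
    m.leadingTerm (topDickson σ K)
      = ∏ α : σ → K with α ≠ 0, m.leadingTerm (linearForm α) := map_prod (leadingTermHom m K) _ _
    _ = ∏ t, ∏ α : σ → K with IsGreatest (support α) t, C (α t) * X t := by
      rw [prod_ne_zero_eq_prod_isGreatest_support]
      exact prod_congr rfl fun t _ => prod_congr rfl fun α hα =>
        leadingTerm_linearForm hm (mem_filter.1 hα).2
    _ = ∏ t, (∏ c : K with c ≠ 0, C c * X t) ^ Fintype.card K ^ #{i | i < t} :=
      prod_congr rfl fun t _ => prod_isGreatest_support_comp_apply t fun c => C c * X t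
    _ = ∏ t, -X t ^ ((Fintype.card K - 1) * Fintype.card K ^ #{i | i < t}) := by
      refine prod_congr rfl fun t _ => ?_
      rw [prod_mul_distrib, ← map_prod, prod_ne_zero_eq_neg_one, prod_const, mul_pow, ← map_pow,
        FiniteField.pow_card_pow, ← pow_mul]
      simp [filter_ne']

theorem coeff_monomial_pow_top_dickson_general (j : ℕ) :
    coeff
      (Finsupp.equivFunOnFinite.symm fun t : σ =>
        j * ((Fintype.card K - 1) * Fintype.card K ^ #{i | i < t}))
      (topDickson σ K ^ j) = (-1) ^ (Fintype.card σ * j) := by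
  refine coeff_eq_of_leadingTerm_eq_monomial (m := colexMonomialOrder σ) (by simp) ?_
  calc
    _ = (colexMonomialOrder σ).leadingTerm (topDickson σ K) ^ j :=
      map_pow (leadingTermHom (colexMonomialOrder σ) K) _ _
    _ = _ := by
      rw [leadingTerm_topDickson monotone_colexMonomialOrder_single, prod_neg, mul_pow, ← prod_pow,
        monomial_eq, Finsupp.prod_fintype _ _ (by simp)]
      simp [← pow_mul, mul_comm]

end FiniteField

/-- In the `j`-th power of the top Dickson polynomial
`q = ∏_{α ∈ (ℤ/2)ˢ \ {0}} (α₁u₁ + ⋯ + α_s u_s) ∈ 𝔽₂[u₁,…,u_s]`, the monomial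
`u₁^j · u₂^(2j) · u₃^(4j) ⋯ u_s^(j·2^(s−1))` occurs with coefficient `1`. -/
theorem coeff_monomial_pow_top_dickson (s j : ℕ) (hs : 1 ≤ s) (hj : 1 ≤ j) :
    MvPolynomial.coeff
      (Finsupp.equivFunOnFinite.symm fun ℓ : Fin s => j * 2 ^ (ℓ : ℕ))
      ((∏ α ∈ Finset.univ.filter (fun α : Fin s → ZMod 2 => α ≠ 0),
          ∑ i, MvPolynomial.C (α i) * MvPolynomial.X i) ^ j) = 1 := by
  simpa [topDickson, linearForm, filter_gt_eq_Iio] using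
    coeff_monomial_pow_top_dickson_general (σ := Fin s) (K := ZMod 2) j
end

section
/- Let s ≥ 1 and j ≥ 1 be integers. Let Y = ∏_{ℓ=1}^s S^(j·2^(ℓ−1)) be the product of unit spheres S(V_ℓ) where V_ℓ is a real vector space of dimension j·2^(ℓ−1)+1, with the group G = (ℤ/2)^s acting so that the ℓ-th generator ω_ℓ acts on (p₁,…,p_s) ∈ Y by sending p_ℓ to −p_ℓ and fixing the other coordinates. Let U_s = {(y_α)_{α ∈ (ℤ/2)^s} ∈ ℝ^((ℤ/2)^s) : ∑_α y_α = 0}, with G acting by β·(y_α)_α = (y_{β+α})_α, and let S(U_s^{⊕j}) be the unit sphere in the direct sum of j copies of U_s with the diagonal G-action. Then there exists no continuous G-equivariant map from Y to S(U_s^{⊕j}). -/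
/-- The product `Y = ∏_{ℓ=1}^s S^{j·2^{ℓ−1}}` of unit spheres, where the `ℓ`-th factor is the
unit sphere of a real inner product space of dimension `j·2^{ℓ−1} + 1` (indexed here by
`ℓ ∈ Fin s`, so the `ℓ`-th sphere sits in `ℝ^{j·2^ℓ + 1}` for the 0-based index `ℓ`). -/
abbrev SphereProd (s j : ℕ) : Type :=
  {y : ∀ ℓ : Fin s, EuclideanSpace ℝ (Fin (j * 2 ^ (ℓ : ℕ) + 1)) // ∀ ℓ, ‖y ℓ‖ = 1}

/-!
The representation `U_s` is the sum of all nontrivial real characters of `(ℤ/2)^s`, each occurring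
once, so an equivariant map to `S(U_s^{⊕j})` amounts to `j` functions per nontrivial character on
the product of spheres, transforming by that character and without a common zero. A character has
as last nonzero entry some index `ℓ`, which happens for `2^(ℓ-1)` characters; hence there are as
many functions as the product of projective spaces `∏ ℙ^(j·2^(ℓ-1))` has dimensions.

By Stone–Weierstrass and averaging over the group, each function is a uniform limit of
multihomogeneous real polynomials whose multidegree reduces to the character modulo `2`; by
compactness it suffices that every real multihomogeneous system with such multidegrees has a zero.
A system whose complex zeros all lie in the standard affine chart and are simple has as many zeros
as the multihomogeneous Bézout number of its degrees: along the line to a system of products of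
linear forms, for which the zeros can be counted by hand, the number of zeros is constant outside a
finite set of parameters, and the complement of a finite set in `ℂ` is connected. Modulo `2` the
matrix of degrees is triangular with ones on the diagonal, so the Bézout number is odd, and complex
conjugation fixes one of the zeros, which is therefore real.
-/

namespace MultiprojectiveZeros

section Continuation

open Filter Topology

theorem ncard_eq_of_existsUnique_mem {α β : Type*} {S : Set β} {Z : Set α} {W : α → Set β}
    (hdisj : Z.PairwiseDisjoint W) (hcover : S ⊆ ⋃ z ∈ Z, W z)
    (hunique : ∀ z ∈ Z, ∃! x, x ∈ W z ∧ x ∈ S) : S.ncard = Z.ncard := by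
  choose x hx hx_unique using hunique
  refine (Set.ncard_congr x (fun z hz => (hx z hz).2) ?_ ?_).symm
  · intro z z' hz hz' hzz'
    exact hdisj.elim_set hz hz' (x z hz) (hx z hz).1 (hzz' ▸ (hx z' hz').1)
  · intro y hy
    obtain ⟨z, hz, hyz⟩ := Set.mem_iUnion₂.1 (hcover hy)
    exact ⟨z, hz, (hx_unique z hz y ⟨hyz, hy⟩).symm⟩

theorem eventually_zeros_subset {P E F : Type*} [TopologicalSpace P] [TopologicalSpace E]
    [TopologicalSpace F] [T1Space F] [Zero F] {Φ : P × E → F} (hΦ : Continuous Φ) {t₀ : P}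
    {C U : Set E} (hC : IsCompact C) (hCt : ∀ᶠ t in 𝓝 t₀, {z | Φ (t, z) = 0} ⊆ C)
    (hU : IsOpen U) (hZU : {z | Φ (t₀, z) = 0} ⊆ U) :
    ∀ᶠ t in 𝓝 t₀, {z | Φ (t, z) = 0} ⊆ U := by
  have hne : ∀ᶠ t in 𝓝 t₀, ∀ z ∈ C \ U, Φ (t, z) ≠ 0 :=
    (hC.diff hU).eventually_forall_of_forall_eventually fun z hz =>
      hΦ.continuousAt.eventually_ne fun h => hz.2 (hZU h)
  filter_upwards [hCt, hne] with t hsub hne z hz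
  by_contra hzU
  exact hne z ⟨hsub hz, hzU⟩ hz

variable {𝕜 P E F : Type*} [NontriviallyNormedField 𝕜]
  [NormedAddCommGroup P] [NormedSpace 𝕜 P] [NormedAddCommGroup E] [NormedSpace 𝕜 E]
  [NormedAddCommGroup F] [NormedSpace 𝕜 F]

variable (𝕜) in
/-- `Φ` is strictly differentiable at `u` and its partial derivative in the second variable is
invertible there: the hypothesis of the implicit function theorem. -/
def HasInvertiblePartialDeriv (Φ : P × E → F) (u : P × E) : Prop :=
  ∃ L : P × E →L[𝕜] F, HasStrictFDerivAt Φ L u ∧ (L ∘L .inr 𝕜 P E).IsInvertible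

variable [CompleteSpace P] [CompleteSpace E] [CompleteSpace F] {Φ : P × E → F} {t₀ : P}

theorem exists_isOpen_eventually_existsUnique_zero {z : E}
    (hd : HasInvertiblePartialDeriv 𝕜 Φ (t₀, z)) (hz : Φ (t₀, z) = 0) {V : Set E}
    (hV : V ∈ 𝓝 z) :
    ∃ W ⊆ V, IsOpen W ∧ z ∈ W ∧ ∀ᶠ t in 𝓝 t₀, ∃! z', z' ∈ W ∧ Φ (t, z') = 0 := by
  obtain ⟨L, hL, hLinv⟩ := hd
  set ψ := hL.implicitFunctionOfProdDomain hLinv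
  have hψ_tendsto : Tendsto ψ (𝓝 t₀) (𝓝 z) := hL.tendsto_implicitFunctionOfProdDomain hLinv
  have hψ : ∀ᶠ v in 𝓝 t₀ ×ˢ 𝓝 z, Φ v = 0 ↔ ψ v.1 = v.2 := by
    rw [← nhds_prod_eq, ← hz]
    exact hL.eventually_apply_eq_iff_implicitFunctionOfProdDomain hLinv
  obtain ⟨p, hp, q, hq, hpq⟩ := eventually_prod_iff.1 hψ
  obtain ⟨W, hWsub, hWopen, hzW⟩ := mem_nhds_iff.1 (inter_mem hq hV)
  refine ⟨W, fun z' hz' => (hWsub hz').2, hWopen, hzW, ?_⟩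
  filter_upwards [hp, hψ_tendsto.eventually (hWopen.mem_nhds hzW)] with t ht hψW
  exact ⟨ψ t, ⟨hψW, (hpq ht (hWsub hψW).1).2 rfl⟩,
    fun z' hz' => ((hpq ht (hWsub hz'.1).1).1 hz'.2).symm⟩

theorem finite_zeros_of_isCompact (hZ : IsCompact {z | Φ (t₀, z) = 0})
    (hd : ∀ z, Φ (t₀, z) = 0 → HasInvertiblePartialDeriv 𝕜 Φ (t₀, z)) :
    {z | Φ (t₀, z) = 0}.Finite := by
  refine hZ.finite (isDiscrete_iff_forall_mem_exists_isOpen.2 fun z hz => ?_)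
  obtain ⟨W, -, hWopen, hzW, hW⟩ :=
    exists_isOpen_eventually_existsUnique_zero (hd z hz) hz univ_mem
  refine ⟨W, hWopen, ?_⟩
  ext z'
  exact ⟨fun h => hW.self_of_nhds.unique h ⟨hzW, hz⟩, by rintro rfl; exact ⟨hzW, hz⟩⟩

theorem eventually_ncard_zeros_eq (hΦ : Continuous Φ)
    (hd : ∀ z, Φ (t₀, z) = 0 → HasInvertiblePartialDeriv 𝕜 Φ (t₀, z))
    {C : Set E} (hC : IsCompact C) (hCt : ∀ᶠ t in 𝓝 t₀, {z | Φ (t, z) = 0} ⊆ C) :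
    ∀ᶠ t in 𝓝 t₀, {z | Φ (t, z) = 0}.ncard = {z | Φ (t₀, z) = 0}.ncard := by
  set Z := {z | Φ (t₀, z) = 0}
  have hZ_closed : IsClosed Z :=
    isClosed_eq (hΦ.comp (Continuous.prodMk_right t₀)) continuous_const
  have hZ_finite : Z.Finite :=
    finite_zeros_of_isCompact (hC.of_isClosed_subset hZ_closed hCt.self_of_nhds) hd
  obtain ⟨V, hV, hV_disj⟩ := hZ_finite.t2_separation
  have hW : ∀ z ∈ Z, ∃ W ⊆ V z, IsOpen W ∧ z ∈ W ∧
      ∀ᶠ t in 𝓝 t₀, ∃! z', z' ∈ W ∧ Φ (t, z') = 0 := fun z hz =>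
    exists_isOpen_eventually_existsUnique_zero (hd z hz) hz ((hV z).2.mem_nhds (hV z).1)
  choose! W hWV hW_open hW_mem hW_unique using hW
  have hsub : ∀ᶠ t in 𝓝 t₀, {z | Φ (t, z) = 0} ⊆ ⋃ z ∈ Z, W z :=
    eventually_zeros_subset hΦ hC hCt (isOpen_biUnion hW_open)
      fun z hz => Set.mem_biUnion hz (hW_mem z hz)
  filter_upwards [hsub, (eventually_all_finite hZ_finite).2 hW_unique] with t hsub hunique
  exact ncard_eq_of_existsUnique_mem (hV_disj.mono_on hWV) hsub hunique

theorem ncard_zeros_eq_of_isPreconnected (hΦ : Continuous Φ) {T : Set P} (hT : IsPreconnected T)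
    (hd : ∀ t ∈ T, ∀ z, Φ (t, z) = 0 → HasInvertiblePartialDeriv 𝕜 Φ (t, z))
    (hproper : ∀ t₀ ∈ T, ∃ C : Set E, IsCompact C ∧ ∀ᶠ t in 𝓝 t₀, {z | Φ (t, z) = 0} ⊆ C)
    {a b : P} (ha : a ∈ T) (hb : b ∈ T) :
    {z | Φ (a, z) = 0}.ncard = {z | Φ (b, z) = 0}.ncard := by
  refine hT.constant (f := fun t => {z | Φ (t, z) = 0}.ncard) (fun t ht => ?_) ha hb
  obtain ⟨C, hC, hCt⟩ := hproper t ht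
  apply ContinuousAt.continuousWithinAt
  rw [ContinuousAt, nhds_discrete ℕ, tendsto_pure]
  exact eventually_ncard_zeros_eq hΦ (hd t ht) hC hCt

theorem hasStrictFDerivAt_eval_mvPolynomial {σ : Type*} [Fintype σ] (p : MvPolynomial σ 𝕜)
    (x : σ → 𝕜) :
    HasStrictFDerivAt (fun y : σ → 𝕜 => MvPolynomial.eval y p)
      (∑ i, MvPolynomial.eval x (MvPolynomial.pderiv i p) •
        (ContinuousLinearMap.proj i : (σ → 𝕜) →L[𝕜] 𝕜)) x := by
  classical
  induction p using MvPolynomial.induction_on with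
  | C a =>
    simp only [MvPolynomial.eval_C]
    refine (hasStrictFDerivAt_const (𝕜 := 𝕜) a x).congr_fderiv ?_
    ext v
    simp
  | add p q hp hq =>
    simp only [map_add]
    refine (hp.add hq).congr_fderiv ?_
    ext v
    simp [add_mul, Finset.sum_add_distrib]
  | mul_X p n hp =>
    simp only [map_mul, MvPolynomial.eval_X]
    refine (hp.mul (hasStrictFDerivAt_apply (𝕜 := 𝕜) n x)).congr_fderiv ?_
    ext v
    simp [MvPolynomial.pderiv_X, Pi.single_apply, add_mul, Finset.sum_add_distrib, mul_assoc,
      Finset.mul_sum, apply_ite, ite_mul]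

end Continuation

section Elimination

open MvPolynomial
open scoped Polynomial

section WeightedHomogeneous

variable {σ R S M : Type*} [CommSemiring R] [CommSemiring S] [AddCommMonoid M] {w : σ → M}

theorem isWeightedHomogeneous_map (f : R →+* S) {p : MvPolynomial σ R} {e : M}
    (hp : IsWeightedHomogeneous w p e) : IsWeightedHomogeneous w (map f p) e := by
  intro m hm
  refine hp fun h => hm ?_
  rw [coeff_map, h, map_zero]

theorem eval_weightedHomogeneousComponent_eq_sum (x : σ → R) (q : MvPolynomial σ R) (e : M)
    [Fintype {m : σ →₀ ℕ // Finsupp.weight w m = e}] :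
    eval x (weightedHomogeneousComponent w e q) =
      ∑ m : {m : σ →₀ ℕ // Finsupp.weight w m = e}, coeff m q * eval x (monomial m 1) := by
  classical
  have hsum : weightedHomogeneousComponent w e q =
      ∑ m : {m : σ →₀ ℕ // Finsupp.weight w m = e}, monomial m (coeff m q) := by
    ext m
    rw [coeff_weightedHomogeneousComponent, coeff_sum]
    simp only [coeff_monomial]
    split_ifs with hm
    · rw [Finset.sum_eq_single ⟨m, hm⟩ (fun b _ hb => if_neg (hb <| Subtype.ext ·)) (by simp),
        if_pos rfl]
    · exact (Finset.sum_eq_zero fun b _ => if_neg fun h => hm (by rw [← h]; exact b.2)).symm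
  simp [hsum, eval_monomial]

attribute [local instance] MvPolynomial.weightedGradedAlgebra in
theorem eval_weightedHomogeneousComponent_eq_zero {κ R : Type*} [CommRing R]
    {P : κ → MvPolynomial σ R} {d : κ → M} (hP : ∀ k, IsWeightedHomogeneous w (P k) (d k))
    {x : σ → R} (hx : ∀ k, eval x (P k) = 0) {q : MvPolynomial σ R}
    (hq : q ∈ Ideal.span (Set.range P)) (e : M) :
    eval x (weightedHomogeneousComponent w e q) = 0 := by
  classical
  have hhom : (Ideal.span (Set.range P)).IsHomogeneous (weightedHomogeneousSubmodule R w) := by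
    apply Ideal.homogeneous_span
    rintro _ ⟨k, rfl⟩
    exact ⟨d k, hP k⟩
  have hker : Ideal.span (Set.range P) ≤ RingHom.ker (eval x) :=
    Ideal.span_le.2 (Set.range_subset_iff.2 hx)
  exact hker (weightedHomogeneousComponent_mem_of_mem R w hhom hq e)

end WeightedHomogeneous

variable {ι : Type*} {β : ι → Type*}

/-- `x` consists of homogeneous coordinates of a point in the product of the projective spaces
with coordinates indexed by the blocks `β l`. -/
def BlockNonzero {R : Type*} [Zero R] (x : (Σ l, β l) → R) : Prop :=
  ∀ l, ∃ i, x ⟨l, i⟩ ≠ 0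

variable [Fintype ι]

theorem sum_single_sigma_le {m : (Σ l, β l) →₀ ℕ} {c : ∀ l, β l} {e : ι → ℕ}
    (h : ∀ l, e l ≤ m ⟨l, c l⟩) : ∑ l, Finsupp.single (⟨l, c l⟩ : Σ l, β l) (e l) ≤ m := by
  classical
  rintro ⟨l, i⟩
  rw [Finsupp.finsetSum_apply, Finset.sum_eq_single l _ (by simp)]
  · rw [Finsupp.single_apply]
    split_ifs with hi
    · exact hi ▸ h l
    · exact Nat.zero_le _
  · intro l' _ hl'
    exact Finsupp.single_eq_of_ne fun h => hl' (congrArg Sigma.fst h).symm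

theorem monomial_mem_of_prod_X_pow_mem {R : Type*} [CommSemiring R]
    {I : Ideal (MvPolynomial (Σ l, β l) R)} {c : ∀ l, β l} {r : ℕ} (hI : (∏ l, X ⟨l, c l⟩) ^ r ∈ I)
    {m : (Σ l, β l) →₀ ℕ} (hm : ∀ l, r ≤ m ⟨l, c l⟩) : monomial m 1 ∈ I := by
  have hpow : (∏ l, (X ⟨l, c l⟩ : MvPolynomial (Σ l, β l) R)) ^ r =
      monomial (∑ l, Finsupp.single ⟨l, c l⟩ r) 1 := by
    simp only [monomial_sum_one, ← Finset.prod_pow, X_pow_eq_monomial]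
  rw [← tsub_add_cancel_of_le (sum_single_sigma_le hm), ← one_mul (1 : R), ← monomial_mul, ← hpow]
  exact I.mul_mem_left _ hI

section AlgClosed

variable [∀ l, Fintype (β l)] {K : Type*} [Field K] [IsAlgClosed K] {κ : Type*}

theorem prod_X_mem_radical_span {P : κ → MvPolynomial (Σ l, β l) K}
    (hP : ∀ x, BlockNonzero x → ∃ k, eval x (P k) ≠ 0) (c : ∀ l, β l) :
    ∏ l, X ⟨l, c l⟩ ∈ (Ideal.span (Set.range P)).radical := by
  rw [← vanishingIdeal_zeroLocus_eq_radical (K := K), mem_vanishingIdeal_iff]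
  intro x hx
  by_contra hne
  rw [map_prod] at hne
  obtain ⟨k, hk⟩ := hP x fun l =>
    ⟨c l, by simpa using Finset.prod_ne_zero_iff.1 hne l (Finset.mem_univ l)⟩
  exact hk (hx _ (Ideal.subset_span ⟨k, rfl⟩))

theorem exists_forall_prod_X_pow_mem_span {P : κ → MvPolynomial (Σ l, β l) K}
    (hP : ∀ x, BlockNonzero x → ∃ k, eval x (P k) ≠ 0) :
    ∃ r, ∀ c : ∀ l, β l, (∏ l, X ⟨l, c l⟩) ^ r ∈ Ideal.span (Set.range P) := by
  classical
  choose r hr using prod_X_mem_radical_span hP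
  exact ⟨∑ c, r c, fun c => Ideal.pow_mem_of_pow_mem _ (hr c)
    (Finset.single_le_sum (fun _ _ => Nat.zero_le _) (Finset.mem_univ c))⟩

end AlgClosed

variable [DecidableEq ι]

variable (β) in
/-- The multigrading on polynomials in blocks of variables: `X ⟨l, i⟩` has degree one in block
`l` and degree zero in the other blocks. -/
def blockWeight (a : Σ l, β l) : ι → ℕ := Pi.single a.1 1

theorem weight_sum_single (c : ∀ l, β l) (e : ι → ℕ) :
    Finsupp.weight (blockWeight β) (∑ l, Finsupp.single ⟨l, c l⟩ (e l)) = e := by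
  ext l
  simp [map_sum, Finsupp.weight_single, blockWeight, Finset.sum_apply, Pi.single_apply]

variable {K : Type*} [Field K]

theorem exists_eval_monomial_ne_zero {x : (Σ l, β l) → K} (hx : BlockNonzero x) (e : ι → ℕ) :
    ∃ m, Finsupp.weight (blockWeight β) m = e ∧ eval x (monomial m 1) ≠ 0 := by
  choose c hc using hx
  refine ⟨_, weight_sum_single c e, ?_⟩
  simp only [monomial_sum_one, map_prod, ← X_pow_eq_monomial, map_pow, eval_X]
  exact Finset.prod_ne_zero_iff.2 fun l _ => pow_ne_zero _ (hc l)

variable [∀ l, Fintype (β l)]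

theorem weight_blockWeight_apply (m : (Σ l, β l) →₀ ℕ) (l : ι) :
    Finsupp.weight (blockWeight β) m l = ∑ i, m ⟨l, i⟩ := by
  rw [Finsupp.weight_apply, Finsupp.sum_fintype _ _ (by simp), Finset.sum_apply,
    Fintype.sum_sigma, Finset.sum_eq_single l _ (by simp)]
  · simp [blockWeight]
  · intro l' _ hl'
    simp [blockWeight, hl'.symm]

theorem finite_weight_blockWeight_eq (e : ι → ℕ) :
    Finite {m : (Σ l, β l) →₀ ℕ // Finsupp.weight (blockWeight β) m = e} := by
  classical
  refine Set.Finite.subset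
    (Set.finite_Iic (Finsupp.equivFunOnFinite.symm fun a : Σ l, β l => e a.1)) ?_
  rintro m rfl ⟨l, i⟩
  simp only [Finsupp.equivFunOnFinite_symm_apply_apply, weight_blockWeight_apply]
  exact Finset.single_le_sum (f := fun i => m ⟨l, i⟩) (fun _ _ => Nat.zero_le _)
    (Finset.mem_univ i)

theorem exists_le_apply_of_weight_eq {m : (Σ l, β l) →₀ ℕ} {r : ℕ}
    (hm : Finsupp.weight (blockWeight β) m = fun _ => (∑ l, Fintype.card (β l)) * r + 1) (l : ι) :
    ∃ i, r ≤ m ⟨l, i⟩ := by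
  by_contra! hlt
  have hle : ∑ i, m ⟨l, i⟩ ≤ (∑ l, Fintype.card (β l)) * r := calc
    ∑ i, m ⟨l, i⟩ ≤ ∑ _i : β l, r := Finset.sum_le_sum fun i _ => (hlt i).le
    _ = Fintype.card (β l) * r := by simp
    _ ≤ (∑ l, Fintype.card (β l)) * r := by
      gcongr
      exact Finset.single_le_sum (f := fun l => Fintype.card (β l)) (fun _ _ => Nat.zero_le _)
        (Finset.mem_univ l)
  have heq := congrFun hm l
  rw [weight_blockWeight_apply] at heq
  omega

variable [IsAlgClosed K] {κ : Type*}

theorem exists_forall_monomial_mem_span {P : κ → MvPolynomial (Σ l, β l) K}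
    (hP : ∀ x, BlockNonzero x → ∃ k, eval x (P k) ≠ 0) :
    ∃ e : ι → ℕ, ∀ m, Finsupp.weight (blockWeight β) m = e →
      monomial m 1 ∈ Ideal.span (Set.range P) := by
  obtain ⟨r, hr⟩ := exists_forall_prod_X_pow_mem_span hP
  refine ⟨fun _ => (∑ l, Fintype.card (β l)) * r + 1, fun m hm => ?_⟩
  choose c hc using exists_le_apply_of_weight_eq hm
  exact monomial_mem_of_prod_X_pow_mem (hr c) hc

theorem map_span_range {σ R S : Type*} [CommSemiring R] [CommSemiring S] (f : R →+* S)
    (Φ : κ → MvPolynomial σ R) :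
    Ideal.map (map f) (Ideal.span (Set.range Φ)) = Ideal.span (Set.range fun k => map f (Φ k)) := by
  rw [Ideal.map_span, ← Set.range_comp]
  rfl

theorem finite_setOf_det_mapMatrix_eval_eq_zero {A R : Type*} [Fintype A] [DecidableEq A]
    [CommRing R] [IsDomain R] {M : Matrix A A R[X]} {t₀ : R}
    (h₀ : ((Polynomial.evalRingHom t₀).mapMatrix M).det ≠ 0) :
    {t | ((Polynomial.evalRingHom t).mapMatrix M).det = 0}.Finite := by
  simp only [← RingHom.map_det] at h₀ ⊢
  exact Polynomial.finite_setOfPred_isRoot fun h => h₀ (by rw [h, map_zero])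

theorem exists_mem_span_range_map_evalRingHom_eq {σ κ R : Type*} [CommRing R]
    {Φ : κ → MvPolynomial σ R[X]} {t : R} {p : MvPolynomial σ R}
    (hp : p ∈ Ideal.span (Set.range fun k => map (Polynomial.evalRingHom t) (Φ k))) :
    ∃ q ∈ Ideal.span (Set.range Φ), map (Polynomial.evalRingHom t) q = p := by
  refine (Ideal.mem_map_iff_of_surjective _
    (map_surjective _ (Polynomial.eval_surjective t))).1 ?_
  rwa [map_span_range]

/-- The main theorem of elimination theory over the affine line, by way of the Macaulay matrix
`coeff b (q a)`: it is the identity at `t₀`, and at every parameter it kills the vector of values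
of the monomials of degree `e` at a common zero. -/
theorem finite_setOf_exists_common_zero {Φ : κ → MvPolynomial (Σ l, β l) K[X]} {d : κ → ι → ℕ}
    (hΦ : ∀ k, IsWeightedHomogeneous (blockWeight β) (Φ k) (d k)) {t₀ : K}
    (h₀ : ∀ x, BlockNonzero x → ∃ k, eval x (map (Polynomial.evalRingHom t₀) (Φ k)) ≠ 0) :
    {t | ∃ x, BlockNonzero x ∧ ∀ k, eval x (map (Polynomial.evalRingHom t) (Φ k)) = 0}.Finite := by
  classical
  obtain ⟨e, he⟩ := exists_forall_monomial_mem_span h₀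
  let A := {m : (Σ l, β l) →₀ ℕ // Finsupp.weight (blockWeight β) m = e}
  have : Finite A := finite_weight_blockWeight_eq e
  have := Fintype.ofFinite A
  choose q hq hq₀ using fun a : A => exists_mem_span_range_map_evalRingHom_eq (he a.1 a.2)
  let M : Matrix A A K[X] := Matrix.of fun a b => coeff b.1 (q a)
  have hM (t : K) (a b : A) : (Polynomial.evalRingHom t).mapMatrix M a b =
      coeff b.1 (map (Polynomial.evalRingHom t) (q a)) := by
    rw [RingHom.mapMatrix_apply, Matrix.map_apply, coeff_map]
    rfl
  have hM₀ : (Polynomial.evalRingHom t₀).mapMatrix M = 1 := by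
    ext a b
    rw [hM, hq₀, coeff_monomial, Matrix.one_apply]
    exact if_congr Subtype.ext_iff.symm rfl rfl
  refine (finite_setOf_det_mapMatrix_eval_eq_zero (t₀ := t₀) (M := M) (by simp [hM₀])).subset ?_
  rintro t ⟨x, hx, hzero⟩
  refine Matrix.exists_mulVec_eq_zero_iff.1 ⟨fun b => eval x (monomial b.1 1), fun h => ?_, ?_⟩
  · obtain ⟨m, hm, hne⟩ := exists_eval_monomial_ne_zero hx e
    exact hne (congrFun h ⟨m, hm⟩)
  · ext a
    have hmem := Ideal.mem_map_of_mem (map (Polynomial.evalRingHom t)) (hq a)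
    rw [map_span_range] at hmem
    rw [Pi.zero_apply, ← eval_weightedHomogeneousComponent_eq_zero
      (fun k => isWeightedHomogeneous_map _ (hΦ k)) hzero hmem e,
      eval_weightedHomogeneousComponent_eq_sum]
    exact Finset.sum_congr rfl fun b _ => congrArg (· * _) (hM t a b)

end Elimination

section BezoutNumber

open Finset

theorem eq_of_le_of_card_fiber_eq {ι κ : Type*} [PartialOrder ι] [Finite ι] [DecidableEq ι]
    [Fintype κ] {u v : κ → ι} (huv : u ≤ v)
    (hcard : ∀ l, #{k | u k = l} = #{k | v k = l}) : u = v := by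
  classical
  have := Fintype.ofFinite ι
  have hcard_le (w : κ → ι) (l : ι) : #{k | w k ≤ l} = ∑ m with m ≤ l, #{k | w k = m} := by
    rw [card_eq_sum_card_fiberwise (f := w) (t := {m | m ≤ l}) (fun k hk => by simpa using hk)]
    refine sum_congr rfl fun m hm => congrArg card ?_
    ext k
    simp only [mem_filter, mem_univ, true_and] at hm ⊢
    exact ⟨And.right, fun h => ⟨h ▸ hm, h⟩⟩
  ext k
  refine le_antisymm (huv k) ?_
  have heq : univ.filter (fun k' => v k' ≤ u k) = univ.filter (fun k' => u k' ≤ u k) :=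
    eq_of_subset_of_card_le (monotone_filter_right _ fun k' _ h => (huv k').trans h)
      (by simp only [hcard_le, hcard, le_refl])
  have hk : k ∈ univ.filter (fun k' => v k' ≤ u k) := by simp [heq]
  exact (mem_filter.1 hk).2

variable {ι κ R : Type*} [Fintype ι] [DecidableEq ι] [Fintype κ]

theorem card_filter_fst_eq (d : ι → ℕ) (l : ι) : #{p : Σ l, Fin (d l) | p.1 = l} = d l := by
  rw [← Fintype.card_subtype, Fintype.card_congr (Equiv.sigmaSubtype l), Fintype.card_fin]

variable [DecidableEq κ] [CommSemiring R]

/-- The multihomogeneous Bézout number of a system of equations of multidegrees `d k` in a product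
of projective spaces of dimensions `n l`: the coefficient of `∏ l, X l ^ n l` in
`∏ k, ∑ l, d k l * X l`. The degrees lie in a semiring so that the number can be computed
modulo `2`. -/
def bezoutNumber (n : ι → ℕ) (d : κ → ι → R) : R :=
  ∑ u : κ → ι with ∀ l, #{k | u k = l} = n l, ∏ k, d k (u k)

theorem map_bezoutNumber {S : Type*} [CommSemiring S] (f : R →+* S) (n : ι → ℕ)
    (d : κ → ι → R) : f (bezoutNumber n d) = bezoutNumber n fun k l => f (d k l) := by
  simp only [bezoutNumber, map_sum, map_prod]

theorem card_balanced_selections (n : ι → ℕ) (d : κ → ι → ℕ) :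
    #{a : ∀ k, Σ l, Fin (d k l) | ∀ l, #{k | (a k).1 = l} = n l} = bezoutNumber n d := by
  rw [card_eq_sum_card_fiberwise (f := fun a k => (a k).1)
    (t := {u : κ → ι | ∀ l, #{k | u k = l} = n l}) (fun a ha => by simpa using ha)]
  refine sum_congr rfl fun u hu => ?_
  simp only [← card_filter_fst_eq (d _) (u _)]
  rw [filter_filter, ← Fintype.card_piFinset]
  congr 1
  ext a
  simp only [mem_filter, mem_univ, true_and, Fintype.mem_piFinset, funext_iff]
  refine ⟨And.right, fun ha => ⟨?_, ha⟩⟩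
  simpa only [ha, mem_filter, mem_univ, true_and] using hu

theorem bezoutNumber_eq_prod_of_triangular [LinearOrder ι] {n : ι → ℕ}
    {d : (Σ l, Fin (n l)) → ι → R} (hd : ∀ k l, k.1 < l → d k l = 0) :
    bezoutNumber n d = ∏ k, d k k.1 := by
  refine sum_eq_single_of_mem Sigma.fst (by simpa using card_filter_fst_eq n) fun u hu hne => ?_
  simp only [mem_filter, mem_univ, true_and] at hu
  obtain ⟨k, hk⟩ : ∃ k, k.1 < u k := by
    by_contra! hle
    exact hne (eq_of_le_of_card_fiber_eq hle fun l => (hu l).trans (card_filter_fst_eq n l).symm)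
  exact prod_eq_zero (mem_univ k) (hd k _ hk)

end BezoutNumber

section Systems

open MvPolynomial

variable {ι : Type*}

/-- The indices of the affine coordinates on a product of projective spaces of dimensions `n l`;
they also number the equations of a system with as many equations as affine coordinates. -/
abbrev AffineIndex (n : ι → ℕ) : Type _ := Σ l, Fin (n l)

/-- The indices of the homogeneous coordinates on a product of projective spaces of dimensions
`n l`. -/
abbrev ProjIndex (n : ι → ℕ) : Type _ := Σ l, Fin (n l + 1)

variable {n : ι → ℕ} {R : Type*}

/-- Prepend the entry `r` to every block. For `r = 1` this passes from affine to homogeneous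
coordinates, for `r = 0` it embeds the tangent space of the affine chart. -/
def consBlocks (r : R) (z : AffineIndex n → R) : ProjIndex n → R :=
  fun a => Fin.cons (α := fun _ => R) r (fun i => z ⟨a.1, i⟩) a.2

@[simp]
theorem consBlocks_zero (r : R) (z : AffineIndex n → R) (l : ι) : consBlocks r z ⟨l, 0⟩ = r := rfl

@[simp]
theorem consBlocks_succ (r : R) (z : AffineIndex n → R) (l : ι) (i : Fin (n l)) :
    consBlocks r z ⟨l, i.succ⟩ = z ⟨l, i⟩ := rfl

theorem blockNonzero_consBlocks_one [MulZeroOneClass R] [Nontrivial R] (z : AffineIndex n → R) :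
    BlockNonzero (consBlocks 1 z) := fun l => ⟨0, by simp⟩

variable [CommRing R]

/-- The zeros of the system `F` in the affine chart where all leading homogeneous coordinates
are `1`. -/
def affineZeros (F : AffineIndex n → MvPolynomial (ProjIndex n) R) : Set (AffineIndex n → R) :=
  {z | ∀ k, eval (consBlocks 1 z) (F k) = 0}

variable [Fintype ι] [DecidableEq ι]

/-- The Jacobian determinant of `F` in the affine chart, with columns weighted by the leading
coordinates: where it does not vanish, the point lies in the chart. -/
noncomputable def jacobian (F : AffineIndex n → MvPolynomial (ProjIndex n) R) :
    MvPolynomial (ProjIndex n) R :=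
  (Matrix.of fun k b : AffineIndex n => X ⟨b.1, 0⟩ * pderiv ⟨b.1, b.2.succ⟩ (F k)).det

/-- All zeros of the system `F` in the product of projective spaces lie in the affine chart and
are simple. -/
def Nondegenerate (F : AffineIndex n → MvPolynomial (ProjIndex n) R) : Prop :=
  ∀ x, BlockNonzero x → (∀ k, eval x (F k) = 0) → eval x (jacobian F) ≠ 0

theorem eval_jacobian (F : AffineIndex n → MvPolynomial (ProjIndex n) R) (x : ProjIndex n → R) :
    eval x (jacobian F) = (Matrix.of fun k b : AffineIndex n =>
      x ⟨b.1, 0⟩ * eval x (pderiv ⟨b.1, b.2.succ⟩ (F k))).det := by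
  rw [jacobian, RingHom.map_det]
  congr 1
  ext k b
  simp

end Systems

section SplitSystem

open MvPolynomial

variable {ι : Type*} {n : ι → ℕ}

/-- The linear form in block `l` with coefficients on the moment curve at `c`. It evaluates
`∑ i, x ⟨l, i⟩ * T ^ i` at `T = c`, so more than `n l` of these forms never vanish together. -/
noncomputable def momentForm {R : Type*} [CommSemiring R] (n : ι → ℕ) (c : R) (l : ι) :
    MvPolynomial (ProjIndex n) R :=
  ∑ i : Fin (n l + 1), C (c ^ (i : ℕ)) * X ⟨l, i⟩

section MomentForm

variable {R : Type*} [CommSemiring R]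

theorem map_momentForm {S : Type*} [CommSemiring S] (f : R →+* S) (c : R) (l : ι) :
    map f (momentForm n c l) = momentForm n (f c) l := by
  simp [momentForm]

theorem isWeightedHomogeneous_momentForm [DecidableEq ι] (c : R) (l : ι) :
    IsWeightedHomogeneous (blockWeight fun l => Fin (n l + 1)) (momentForm n c l)
      (Pi.single l 1) :=
  IsWeightedHomogeneous.sum _ _ _ fun i _ =>
    (isWeightedHomogeneous_X R (blockWeight fun l => Fin (n l + 1)) ⟨l, i⟩).C_mul _

theorem eval_momentForm (x : ProjIndex n → R) (c : R) (l : ι) :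
    eval x (momentForm n c l) = ∑ i : Fin (n l + 1), c ^ (i : ℕ) * x ⟨l, i⟩ := by
  simp [momentForm]

theorem eval_consBlocks_momentForm (r : R) (z : AffineIndex n → R) (c : R) (l : ι) :
    eval (consBlocks r z) (momentForm n c l) = r + ∑ i : Fin (n l), c ^ (i + 1 : ℕ) * z ⟨l, i⟩ := by
  simp [eval_momentForm, Fin.sum_univ_succ]

theorem pderiv_momentForm [DecidableEq ι] (c : R) (l l' : ι) (i : Fin (n l' + 1)) :
    pderiv ⟨l', i⟩ (momentForm n c l) = if l' = l then C (c ^ (i : ℕ)) else 0 := by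
  rw [momentForm, map_sum]
  simp only [pderiv_C_mul, pderiv_X]
  split_ifs with h
  · subst h
    rw [Finset.sum_eq_single i (fun b _ hb => ?_) (by simp)]
    · simp
    · rw [Pi.single_eq_of_ne (by simpa using hb), mul_zero]
  · refine Finset.sum_eq_zero fun b _ => ?_
    rw [Pi.single_eq_of_ne fun h' => h (congrArg Sigma.fst h').symm, mul_zero]

theorem sum_leading_mul_eval_pderiv_momentForm [Fintype ι] (x : ProjIndex n → R)
    (v : AffineIndex n → R) (c : R) (l : ι) :
    ∑ b : AffineIndex n, x ⟨b.1, 0⟩ * eval x (pderiv ⟨b.1, b.2.succ⟩ (momentForm n c l)) * v b =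
      x ⟨l, 0⟩ * eval (consBlocks 0 v) (momentForm n c l) := by
  classical
  rw [Fintype.sum_sigma, Finset.sum_eq_single l (fun l' _ hl' => ?_) (by simp)]
  · simp [pderiv_momentForm, eval_consBlocks_momentForm, Finset.mul_sum, mul_assoc]
  · simp [pderiv_momentForm, hl']

end MomentForm

theorem eq_zero_of_sum_pow_mul_eq_zero {R : Type*} [CommRing R] [IsDomain R] {N : ℕ}
    {u : Fin N → R} {S : Finset R} (hS : N ≤ S.card)
    (h : ∀ c ∈ S, ∑ i : Fin N, c ^ (i : ℕ) * u i = 0) : u = 0 := by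
  obtain ⟨e⟩ : Nonempty (Fin N ↪ S) := Function.Embedding.nonempty_of_card_le (by simpa using hS)
  exact Matrix.eq_zero_of_forall_index_sum_pow_mul_eq_zero
    (Subtype.val_injective.comp e.injective) fun j => h _ (e j).2

section Selections

variable {d : AffineIndex n → ι → ℕ} {K : Type*} [Field K]

/-- The set indexing the linear factors of a split system of multidegrees `d`. -/
abbrev FactorIndex (d : AffineIndex n → ι → ℕ) : Type _ := Σ k, Σ l, Fin (d k l)

/-- A choice of one linear factor from each equation, `n l` of them in block `l`. -/
def IsBalanced [Fintype ι] [DecidableEq ι] (a : ∀ k : AffineIndex n, Σ l, Fin (d k l)) : Prop :=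
  ∀ l, (Finset.univ.filter fun k => (a k).1 = l).card = n l

variable [Fintype ι]

/-- The system of multidegrees `d` whose equations are products of the linear forms with
parameters `c`. -/
noncomputable def splitSystem {R : Type*} [CommSemiring R] (c : FactorIndex d → R)
    (k : AffineIndex n) : MvPolynomial (ProjIndex n) R :=
  ∏ p : Σ l, Fin (d k l), momentForm n (c ⟨k, p⟩) p.1

theorem map_splitSystem {R S : Type*} [CommSemiring R] [CommSemiring S] (f : R →+* S)
    (c : FactorIndex d → R) (k : AffineIndex n) :
    map f (splitSystem c k) = splitSystem (fun q => f (c q)) k := by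
  simp [splitSystem, map_momentForm]

theorem isWeightedHomogeneous_splitSystem [DecidableEq ι] {R : Type*} [CommSemiring R]
    (c : FactorIndex d → R) (k : AffineIndex n) :
    IsWeightedHomogeneous (blockWeight fun l => Fin (n l + 1)) (splitSystem c k) (d k) := by
  have hdeg : ∑ p : Σ l, Fin (d k l), (Pi.single p.1 1 : ι → ℕ) = d k := by
    ext l
    simp [Finset.sum_apply, Pi.single_apply, eq_comm (a := l), card_filter_fst_eq]
  rw [← hdeg]
  exact IsWeightedHomogeneous.prod _ _ _ fun p _ => isWeightedHomogeneous_momentForm _ _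

theorem eval_splitSystem_eq_zero_iff {c : FactorIndex d → K} {x : ProjIndex n → K}
    {k : AffineIndex n} :
    eval x (splitSystem c k) = 0 ↔ ∃ p, eval x (momentForm n (c ⟨k, p⟩) p.1) = 0 := by
  simp [splitSystem, map_prod, Finset.prod_eq_zero_iff]

variable [DecidableEq ι] {c : FactorIndex d → K}

open Classical in
theorem card_vanishing_factors_le (hc : c.Injective) {x : ProjIndex n → K} (hx : BlockNonzero x)
    (l : ι) : (Finset.univ.filter fun q : FactorIndex d =>
      q.2.1 = l ∧ eval x (momentForm n (c q) q.2.1) = 0).card ≤ n l := by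
  by_contra! hlt
  obtain ⟨i, hi⟩ := hx l
  refine hi (congrFun (eq_zero_of_sum_pow_mul_eq_zero (u := fun i => x ⟨l, i⟩)
    (S := (Finset.univ.filter fun q : FactorIndex d =>
      q.2.1 = l ∧ eval x (momentForm n (c q) q.2.1) = 0).image c) ?_ ?_) i)
  · rw [Finset.card_image_of_injective _ hc]
    exact hlt
  · intro c' hc'
    obtain ⟨q, hq, rfl⟩ := Finset.mem_image.1 hc'
    obtain ⟨rfl, hzero⟩ := (Finset.mem_filter.1 hq).2
    rwa [eval_momentForm] at hzero

theorem isBalanced_of_card_le {a : ∀ k : AffineIndex n, Σ l, Fin (d k l)}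
    (h : ∀ l, (Finset.univ.filter fun k => (a k).1 = l).card ≤ n l) : IsBalanced a := by
  refine fun l => (Finset.sum_eq_sum_iff_of_le fun l _ => h l).1 ?_ l (Finset.mem_univ l)
  rw [← Finset.card_eq_sum_card_fiberwise (fun _ _ => Finset.mem_univ _)]
  simp

/-- The selected factors already exhaust the number of factors that may vanish at `x`. -/
theorem exists_isBalanced_forall_eval_momentForm_eq_zero_iff (hc : c.Injective)
    {x : ProjIndex n → K} (hx : BlockNonzero x) (hzero : ∀ k, eval x (splitSystem c k) = 0) :
    ∃ a : ∀ k, Σ l, Fin (d k l), IsBalanced a ∧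
      ∀ k p, eval x (momentForm n (c ⟨k, p⟩) p.1) = 0 ↔ p = a k := by
  classical
  choose a ha using fun k => eval_splitSystem_eq_zero_iff.1 (hzero k)
  let vanishing (l : ι) : Finset (FactorIndex d) :=
    Finset.univ.filter fun q => q.2.1 = l ∧ eval x (momentForm n (c q) q.2.1) = 0
  let selected (l : ι) : Finset (FactorIndex d) :=
    (Finset.univ.filter fun k => (a k).1 = l).image fun k => ⟨k, a k⟩
  have hsub (l : ι) : selected l ⊆ vanishing l := by
    simp only [selected, Finset.image_subset_iff, Finset.mem_filter, Finset.mem_univ, true_and,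
      vanishing]
    exact fun k hk => ⟨hk, ha k⟩
  have hcard (l : ι) :
      (selected l).card = (Finset.univ.filter fun k => (a k).1 = l).card :=
    Finset.card_image_of_injective _ fun k k' h => congrArg Sigma.fst h
  have hbalanced : IsBalanced a := isBalanced_of_card_le fun l =>
    hcard l ▸ (Finset.card_le_card (hsub l)).trans (card_vanishing_factors_le hc hx l)
  refine ⟨a, hbalanced, fun k p => ⟨fun hp => ?_, fun h => h ▸ ha k⟩⟩
  have heq : selected p.1 = vanishing p.1 := Finset.eq_of_subset_of_card_le (hsub p.1)
    ((card_vanishing_factors_le hc hx p.1).trans_eq ((hbalanced p.1).symm.trans (hcard p.1).symm))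
  have hmem : ⟨k, p⟩ ∈ selected p.1 := heq ▸ Finset.mem_filter.2 ⟨Finset.mem_univ _, rfl, hp⟩
  obtain ⟨k', -, hk'⟩ := Finset.mem_image.1 hmem
  obtain ⟨rfl, hp'⟩ := Sigma.mk.inj hk'
  exact (eq_of_heq hp').symm

theorem block_eq_zero_of_isBalanced (hc : c.Injective) (hc₀ : ∀ q, c q ≠ 0)
    {a : ∀ k, Σ l, Fin (d k l)} (ha : IsBalanced a) {x : ProjIndex n → K} {l : ι}
    (hx₀ : x ⟨l, 0⟩ = 0) (hx : ∀ k, (a k).1 = l → eval x (momentForm n (c ⟨k, a k⟩) l) = 0)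
    (i : Fin (n l + 1)) : x ⟨l, i⟩ = 0 := by
  classical
  refine congrFun (eq_zero_of_sum_pow_mul_eq_zero (u := fun i => x ⟨l, i⟩) (S := insert 0
    ((Finset.univ.filter fun k => (a k).1 = l).image fun k => c ⟨k, a k⟩)) ?_ ?_) i
  · rw [Finset.card_insert_of_notMem (by simp [hc₀]), Finset.card_image_of_injective _
      fun k k' h => congrArg Sigma.fst (hc h), ha l]
  · simp only [Finset.forall_mem_insert, Finset.forall_mem_image, Finset.mem_filter,
      Finset.mem_univ, true_and]
    refine ⟨by simp [Fin.sum_univ_succ, hx₀], fun k hk => ?_⟩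
    rw [← eval_momentForm]
    exact hx k hk

theorem eq_zero_of_isBalanced (hc : c.Injective) (hc₀ : ∀ q, c q ≠ 0)
    {a : ∀ k, Σ l, Fin (d k l)} (ha : IsBalanced a) {v : AffineIndex n → K}
    (hv : ∀ k, eval (consBlocks 0 v) (momentForm n (c ⟨k, a k⟩) (a k).1) = 0) : v = 0 := by
  ext ⟨l, i⟩
  exact block_eq_zero_of_isBalanced (x := consBlocks 0 v) hc hc₀ ha (consBlocks_zero 0 v l)
    (fun k hk => hk ▸ hv k) i.succ

theorem existsUnique_affine_zero_of_isBalanced (hc : c.Injective) (hc₀ : ∀ q, c q ≠ 0)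
    {a : ∀ k, Σ l, Fin (d k l)} (ha : IsBalanced a) :
    ∃! z, ∀ k, eval (consBlocks 1 z) (momentForm n (c ⟨k, a k⟩) (a k).1) = 0 := by
  let linearPart : (AffineIndex n → K) →ₗ[K] (AffineIndex n → K) :=
    LinearMap.pi fun k =>
      ∑ i : Fin (n (a k).1), c ⟨k, a k⟩ ^ (i + 1 : ℕ) • LinearMap.proj ⟨(a k).1, i⟩
  have hlinearPart (r : K) (z) (k) : eval (consBlocks r z) (momentForm n (c ⟨k, a k⟩) (a k).1) =
      r + linearPart z k := by
    simp [linearPart, eval_consBlocks_momentForm]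
  have hinj : Function.Injective linearPart := by
    rw [injective_iff_map_eq_zero]
    refine fun v hv => eq_zero_of_isBalanced hc hc₀ ha fun k => ?_
    rw [hlinearPart, hv, zero_add, Pi.zero_apply]
  have hbij : Function.Bijective linearPart := ⟨hinj, LinearMap.injective_iff_surjective.1 hinj⟩
  simpa only [hlinearPart, add_comm (1 : K), ← eq_neg_iff_add_eq_zero, ← _root_.funext_iff]
    using hbij.existsUnique fun _ => -1

theorem ncard_affineZeros_splitSystem (hc : c.Injective) (hc₀ : ∀ q, c q ≠ 0) :
    (affineZeros (splitSystem c)).ncard = bezoutNumber n d := by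
  let selectedZeros (a : ∀ k, Σ l, Fin (d k l)) : Set (AffineIndex n → K) :=
    {z | ∀ k, eval (consBlocks 1 z) (momentForm n (c ⟨k, a k⟩) (a k).1) = 0}
  have hsub (a) : selectedZeros a ⊆ affineZeros (splitSystem c) :=
    fun z hz k => eval_splitSystem_eq_zero_iff.2 ⟨a k, hz k⟩
  have hunique {z} (hz : z ∈ affineZeros (splitSystem c)) :=
    exists_isBalanced_forall_eval_momentForm_eq_zero_iff hc (blockNonzero_consBlocks_one z) hz
  rw [← card_balanced_selections, ← Set.ncard_coe_finset]
  refine ncard_eq_of_existsUnique_mem (W := selectedZeros) ?_ ?_ ?_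
  · refine fun a _ b _ hab => Set.disjoint_left.2 fun z hza hzb => hab (funext fun k => ?_)
    obtain ⟨_, -, hiff⟩ := hunique (hsub a hza)
    exact ((hiff k _).1 (hza k)).trans ((hiff k _).1 (hzb k)).symm
  · intro z hz
    obtain ⟨a, ha, hiff⟩ := hunique hz
    exact Set.mem_biUnion (by simpa [IsBalanced] using ha) fun k => (hiff k _).2 rfl
  · intro a ha
    obtain ⟨z, hz, hz'⟩ := existsUnique_affine_zero_of_isBalanced hc hc₀ (a := a)
      (by simpa [IsBalanced] using ha)
    exact ⟨z, ⟨hz, hsub a hz⟩, fun y hy => hz' y hy.1⟩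

theorem eval_pderiv_splitSystem {x : ProjIndex n → K} {k : AffineIndex n} {p : Σ l, Fin (d k l)}
    (hp : eval x (momentForm n (c ⟨k, p⟩) p.1) = 0) (i : ProjIndex n) :
    eval x (pderiv i (splitSystem c k)) =
      (∏ q ∈ Finset.univ.erase p, eval x (momentForm n (c ⟨k, q⟩) q.1)) *
        eval x (pderiv i (momentForm n (c ⟨k, p⟩) p.1)) := by
  rw [splitSystem, ← Finset.mul_prod_erase _ _ (Finset.mem_univ p), pderiv_mul]
  simp [hp, map_prod, mul_comm]

theorem nondegenerate_splitSystem (hc : c.Injective) (hc₀ : ∀ q, c q ≠ 0) :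
    Nondegenerate (splitSystem c) := by
  intro x hx hzero hdet
  obtain ⟨a, ha, hiff⟩ := exists_isBalanced_forall_eval_momentForm_eq_zero_iff hc hx hzero
  have hselected (k) : eval x (momentForm n (c ⟨k, a k⟩) (a k).1) = 0 := (hiff k _).2 rfl
  have hlead (l : ι) : x ⟨l, 0⟩ ≠ 0 := fun hx₀ =>
    let ⟨i, hi⟩ := hx l
    hi (block_eq_zero_of_isBalanced hc hc₀ ha hx₀ (fun k hk => hk ▸ hselected k) i)
  rw [eval_jacobian] at hdet
  obtain ⟨v, hv, hker⟩ := Matrix.exists_mulVec_eq_zero_iff.2 hdet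
  refine hv (eq_zero_of_isBalanced hc hc₀ ha fun k => ?_)
  have hrow := congrFun hker k
  simp only [Matrix.mulVec, dotProduct, Matrix.of_apply, eval_pderiv_splitSystem (hselected k),
    mul_left_comm _ (∏ _ ∈ _, _), mul_assoc (∏ _ ∈ _, _), ← Finset.mul_sum,
    sum_leading_mul_eval_pderiv_momentForm, Pi.zero_apply] at hrow
  have hothers : ∏ q ∈ Finset.univ.erase (a k), eval x (momentForm n (c ⟨k, q⟩) q.1) ≠ 0 :=
    Finset.prod_ne_zero_iff.2 fun q hq => mt (hiff k q).1 (Finset.ne_of_mem_erase hq)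
  exact (mul_eq_zero.1 ((mul_eq_zero.1 hrow).resolve_left hothers)).resolve_left (hlead _)

end Selections

end SplitSystem

section SphereProduct

open MvPolynomial

variable {ι : Type*} {n : ι → ℕ}

/-- The product of the unit spheres of `𝕜 ^ (n l + 1)`, of which the product of projective spaces
is a quotient. -/
def sphereProduct (n : ι → ℕ) (𝕜 : Type*) [NormedField 𝕜] : Set (ProjIndex n → 𝕜) :=
  {x | ∀ l, ∑ i, ‖x ⟨l, i⟩‖ ^ 2 = 1}

theorem blockNonzero_of_mem_sphereProduct {𝕜 : Type*} [NormedField 𝕜] {x : ProjIndex n → 𝕜}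
    (hx : x ∈ sphereProduct n 𝕜) : BlockNonzero x := by
  intro l
  by_contra! hzero
  simpa [hzero] using hx l

theorem isCompact_sphereProduct [Finite ι] {𝕜 : Type*} [NormedField 𝕜] [ProperSpace 𝕜] :
    IsCompact (sphereProduct n 𝕜) := by
  have := Fintype.ofFinite ι
  refine Metric.isCompact_of_isClosed_isBounded ?_ ?_
  · simp only [sphereProduct, Set.ofPred_forall]
    exact isClosed_iInter fun l => isClosed_eq (by fun_prop) continuous_const
  · refine (Metric.isBounded_closedBall (x := 0) (r := 1)).subset fun x hx => ?_
    rw [mem_closedBall_zero_iff, pi_norm_le_iff_of_nonneg zero_le_one]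
    rintro ⟨l, i⟩
    rw [← sq_le_one_iff₀ (norm_nonneg _), ← hx l]
    exact Finset.single_le_sum (f := fun i => ‖x ⟨l, i⟩‖ ^ 2) (fun _ _ => by positivity)
      (Finset.mem_univ i)

theorem exists_mul_mem_sphereProduct {𝕜 : Type*} [RCLike 𝕜] {x : ProjIndex n → 𝕜}
    (hx : BlockNonzero x) :
    ∃ c : ι → 𝕜, (∀ l, c l ≠ 0) ∧ (fun a => c a.1 * x a) ∈ sphereProduct n 𝕜 := by
  let blockNorm (l : ι) : ℝ := √(∑ i, ‖x ⟨l, i⟩‖ ^ 2)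
  have hpos (l : ι) : 0 < blockNorm l := by
    obtain ⟨i, hi⟩ := hx l
    exact Real.sqrt_pos.2 (Finset.sum_pos' (fun _ _ => by positivity)
      ⟨i, Finset.mem_univ i, by positivity⟩)
  refine ⟨fun l => ((blockNorm l)⁻¹ : ℝ), fun l => by simpa using (hpos l).ne', fun l => ?_⟩
  have hsq : ∑ i, ‖x ⟨l, i⟩‖ ^ 2 = blockNorm l ^ 2 :=
    (Real.sq_sqrt (Finset.sum_nonneg fun _ _ => by positivity)).symm
  simp only [norm_mul, RCLike.norm_ofReal, mul_pow, ← Finset.mul_sum, hsq, sq_abs]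
  rw [← mul_pow, inv_mul_cancel₀ (hpos l).ne', one_pow]

end SphereProduct

section Multihomogeneous

open MvPolynomial

theorem isWeightedHomogeneous_X_mul_pderiv {σ R M : Type*} [CommSemiring R] [AddCommMonoid M]
    {w : σ → M} {p : MvPolynomial σ R} {e : M} (hp : IsWeightedHomogeneous w p e) {i j : σ}
    (hij : w i = w j) : IsWeightedHomogeneous w (X i * pderiv j p) e := by
  classical
  rw [p.as_sum, map_sum, Finset.mul_sum]
  refine IsWeightedHomogeneous.sum _ _ _ fun m hm => ?_
  rw [pderiv_monomial]
  by_cases hmj : m j = 0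
  · simpa [hmj] using isWeightedHomogeneous_zero R w e
  · rw [X, monomial_mul]
    refine isWeightedHomogeneous_monomial _ _ _ ?_
    have hle : Finsupp.single j 1 ≤ m := Finsupp.single_le_iff.2 (Nat.one_le_iff_ne_zero.2 hmj)
    rw [map_add, Finsupp.weight_single, hij, ← Finsupp.weight_single, ← map_add,
      add_tsub_cancel_of_le hle, hp (mem_support_iff.1 hm)]

variable {ι : Type*} [Fintype ι] [DecidableEq ι] {n : ι → ℕ} {R : Type*}

theorem eval_mul_block [CommSemiring R] {β : ι → Type*} [∀ l, Fintype (β l)]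
    {p : MvPolynomial (Σ l, β l) R} {e : ι → ℕ}
    (hp : IsWeightedHomogeneous (blockWeight β) p e) (c : ι → R) (x : (Σ l, β l) → R) :
    eval (fun a => c a.1 * x a) p = (∏ l, c l ^ e l) * eval x p := by
  rw [eval_eq', eval_eq', Finset.mul_sum]
  refine Finset.sum_congr rfl fun m hm => ?_
  have hscale : ∏ a : Σ l, β l, c a.1 ^ m a = ∏ l, c l ^ e l := by
    rw [Fintype.prod_sigma, ← hp (mem_support_iff.1 hm)]
    simp only [weight_blockWeight_apply, Finset.prod_pow_eq_pow_sum]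
  simp only [mul_pow, Finset.prod_mul_distrib, hscale]
  ring

/-- The `k`-th equation of `F` is homogeneous of degree `d k l` in the `l`-th block of
variables. -/
def IsMultihomogeneous [CommSemiring R] (F : AffineIndex n → MvPolynomial (ProjIndex n) R)
    (d : AffineIndex n → ι → ℕ) : Prop :=
  ∀ k, IsWeightedHomogeneous (blockWeight fun l => Fin (n l + 1)) (F k) (d k)

variable {d : AffineIndex n → ι → ℕ}

theorem exists_mem_sphereProduct_forall_eval_eq_zero {𝕜 : Type*} [RCLike 𝕜]
    {F : AffineIndex n → MvPolynomial (ProjIndex n) 𝕜} (hF : IsMultihomogeneous F d)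
    {x : ProjIndex n → 𝕜} (hx : BlockNonzero x) (hzero : ∀ k, eval x (F k) = 0) :
    ∃ y ∈ sphereProduct n 𝕜, ∀ k, eval y (F k) = 0 := by
  obtain ⟨c, -, hc⟩ := exists_mul_mem_sphereProduct hx
  exact ⟨_, hc, fun k => by rw [eval_mul_block (hF k), hzero k, mul_zero]⟩

variable [CommRing R]

theorem isWeightedHomogeneous_jacobian {F : AffineIndex n → MvPolynomial (ProjIndex n) R}
    (hF : IsMultihomogeneous F d) :
    IsWeightedHomogeneous (blockWeight fun l => Fin (n l + 1)) (jacobian F) (∑ k, d k) := by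
  rw [jacobian, Matrix.det_apply']
  refine IsWeightedHomogeneous.sum _ _ _ fun σ _ => ?_
  have hterm : IsWeightedHomogeneous (blockWeight fun l => Fin (n l + 1))
      (∏ b : AffineIndex n, X ⟨b.1, 0⟩ * pderiv ⟨b.1, b.2.succ⟩ (F (σ b))) (∑ b, d (σ b)) :=
    IsWeightedHomogeneous.prod _ _ _ fun b _ => isWeightedHomogeneous_X_mul_pderiv (hF (σ b)) rfl
  rw [Equiv.sum_comp σ d] at hterm
  simpa only [map_intCast, Matrix.of_apply] using hterm.C_mul ((Equiv.Perm.sign σ : ℤ) : R)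

theorem map_jacobian {S : Type*} [CommRing S] (f : R →+* S)
    (F : AffineIndex n → MvPolynomial (ProjIndex n) R) :
    map f (jacobian F) = jacobian fun k => map f (F k) := by
  rw [jacobian, RingHom.map_det, jacobian]
  congr 1
  ext k b : 2
  simp [pderiv_map]

theorem leading_ne_zero_of_eval_jacobian_ne_zero
    {F : AffineIndex n → MvPolynomial (ProjIndex n) R} {x : ProjIndex n → R}
    (hx : BlockNonzero x) (hdet : eval x (jacobian F) ≠ 0) (l : ι) : x ⟨l, 0⟩ ≠ 0 := by
  obtain ⟨i, hi⟩ := hx l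
  cases i using Fin.cases with
  | zero => exact hi
  | succ i =>
    refine fun hlead => hdet ?_
    rw [eval_jacobian]
    exact Matrix.det_eq_zero_of_column_eq_zero ⟨l, i⟩ fun k => by simp [hlead]

end Multihomogeneous

section Deformation

open MvPolynomial

variable {σ κ R : Type*} [CommRing R]

/-- The straight-line deformation from the system `G` at `t = 0` to the system `F` at `t = 1`. -/
noncomputable def deform (G F : κ → MvPolynomial σ R) (t : R) (k : κ) : MvPolynomial σ R :=
  G k + C t * (F k - G k)

@[simp]
theorem deform_zero (G F : κ → MvPolynomial σ R) : deform G F 0 = G := by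
  ext1 k
  simp [deform]

@[simp]
theorem deform_one (G F : κ → MvPolynomial σ R) : deform G F 1 = F := by
  ext1 k
  simp [deform]

theorem map_deform {S : Type*} [CommRing S] (f : R →+* S) (G F : κ → MvPolynomial σ R) (t : R)
    (k : κ) :
    map f (deform G F t k) = deform (fun k => map f (G k)) (fun k => map f (F k)) (f t) k := by
  simp [deform]

theorem eval_deform (G F : κ → MvPolynomial σ R) (t : R) (k : κ) (x : σ → R) :
    eval x (deform G F t k) = eval x (G k) + t * (eval x (F k) - eval x (G k)) := by
  simp [deform]

theorem continuous_eval_deform [TopologicalSpace R] [IsTopologicalRing R]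
    (G F : κ → MvPolynomial σ R) (k : κ) :
    Continuous fun q : R × (σ → R) => eval q.2 (deform G F q.1 k) := by
  simp only [eval_deform]
  have hcont (p : MvPolynomial σ R) : Continuous fun q : R × (σ → R) => eval q.2 p :=
    (continuous_eval p).comp continuous_snd
  exact (hcont _).add (continuous_fst.mul ((hcont _).sub (hcont _)))

theorem isClosed_setOf_eval_deform_eq_zero [TopologicalSpace R] [IsTopologicalRing R] [T1Space R]
    (G F : κ → MvPolynomial σ R) :
    IsClosed {q : R × (σ → R) | ∀ k, eval q.2 (deform G F q.1 k) = 0} := by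
  rw [Set.ofPred_forall]
  exact isClosed_iInter fun k => isClosed_singleton.preimage (continuous_eval_deform G F k)

variable {ι : Type*} [DecidableEq ι] {n : ι → ℕ} {d : AffineIndex n → ι → ℕ}

theorem isMultihomogeneous_deform {G F : AffineIndex n → MvPolynomial (ProjIndex n) R}
    (hG : IsMultihomogeneous G d) (hF : IsMultihomogeneous F d) (t : R) :
    IsMultihomogeneous (deform G F t) d := fun k =>
  (weightedHomogeneousSubmodule R _ (d k)).add_mem (hG k)
    (((weightedHomogeneousSubmodule R _ (d k)).sub_mem (hF k) (hG k)).C_mul t)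

theorem finite_setOf_not_nondegenerate_deform [Fintype ι] {K : Type*} [Field K] [IsAlgClosed K]
    {G F : AffineIndex n → MvPolynomial (ProjIndex n) K} (hG : IsMultihomogeneous G d)
    (hF : IsMultihomogeneous F d) (hG₀ : Nondegenerate G) :
    {t | ¬ Nondegenerate (deform G F t)}.Finite := by
  let Q : AffineIndex n → MvPolynomial (ProjIndex n) (Polynomial K) :=
    deform (fun k => map Polynomial.C (G k)) (fun k => map Polynomial.C (F k)) Polynomial.X
  have hQ : IsMultihomogeneous Q d := isMultihomogeneous_deform
    (fun k => isWeightedHomogeneous_map _ (hG k)) (fun k => isWeightedHomogeneous_map _ (hF k)) _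
  have hQ_eval (t : K) : (fun k => map (Polynomial.evalRingHom t) (Q k)) = deform G F t := by
    have hid : (Polynomial.evalRingHom t).comp Polynomial.C = RingHom.id K := by ext; simp
    ext1 k
    simp [Q, map_deform, map_map, hid, map_id]
  have hsystem (t : K) (x : ProjIndex n → K) :
      (∀ q : Option (AffineIndex n),
        eval x (map (Polynomial.evalRingHom t) (q.elim (jacobian Q) Q)) = 0) ↔
      eval x (jacobian (deform G F t)) = 0 ∧ ∀ k, eval x (deform G F t k) = 0 := by
    simp only [Option.forall, Option.elim_none, Option.elim_some, map_jacobian,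
      congrFun (hQ_eval t)]
  refine (finite_setOf_exists_common_zero (κ := Option (AffineIndex n))
    (Φ := fun q => q.elim (jacobian Q) Q) (d := fun q => q.elim (∑ k, d k) d)
    (t₀ := 0) ?_ ?_).subset fun t ht => ?_
  · rintro (_ | k)
    exacts [isWeightedHomogeneous_jacobian hQ, hQ k]
  · intro x hx
    by_contra! hzero
    obtain ⟨hdet, hzero⟩ := (hsystem 0 x).1 hzero
    rw [deform_zero] at hdet hzero
    exact hG₀ x hx hzero hdet
  · simp only [Nondegenerate, Set.mem_ofPred_eq, not_forall, not_not] at ht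
    obtain ⟨x, hx, hzero, hdet⟩ := ht
    exact ⟨x, hx, (hsystem t x).2 ⟨hdet, hzero⟩⟩

end Deformation

section CountingZeros

open MvPolynomial Topology

variable {ι : Type*} {n : ι → ℕ}

/-- The affine coordinates of the point with homogeneous coordinates `x`, provided that it lies in
the chart: where a leading coordinate vanishes, the quotients are junk. -/
def affineCoords {K : Type*} [Field K] (x : ProjIndex n → K) : AffineIndex n → K :=
  fun b => x ⟨b.1, b.2.succ⟩ / x ⟨b.1, 0⟩

theorem affineCoords_mul_consBlocks_one {K : Type*} [Field K] {c : ι → K} (hc : ∀ l, c l ≠ 0)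
    (z : AffineIndex n → K) : affineCoords (fun a => c a.1 * consBlocks 1 z a) = z := by
  ext ⟨l, i⟩
  simp [affineCoords, hc l]

theorem continuous_consBlocks_one {R : Type*} [TopologicalSpace R] [One R] :
    Continuous fun z : AffineIndex n → R => consBlocks 1 z := by
  refine continuous_pi fun ⟨l, i⟩ => ?_
  cases i using Fin.cases with
  | zero => exact continuous_const
  | succ i => exact continuous_apply _

variable [Fintype ι] {𝕜 : Type*} [NontriviallyNormedField 𝕜]

theorem hasStrictFDerivAt_eval_consBlocks_one (p : MvPolynomial (ProjIndex n) 𝕜)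
    (z : AffineIndex n → 𝕜) :
    HasStrictFDerivAt (fun z => eval (consBlocks 1 z) p)
      (∑ b : AffineIndex n, eval (consBlocks 1 z) (pderiv ⟨b.1, b.2.succ⟩ p) •
        (ContinuousLinearMap.proj b : (AffineIndex n → 𝕜) →L[𝕜] 𝕜)) z := by
  have hchart : HasStrictFDerivAt (fun z : AffineIndex n → 𝕜 => consBlocks 1 z)
      (ContinuousLinearMap.pi fun a : ProjIndex n =>
        consBlocks (R := (AffineIndex n → 𝕜) →L[𝕜] 𝕜) 0 ContinuousLinearMap.proj a) z := by
    refine hasStrictFDerivAt_pi'.2 ?_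
    rintro ⟨l, i⟩
    cases i using Fin.cases with
    | zero => exact hasStrictFDerivAt_const _ _
    | succ i => exact hasStrictFDerivAt_apply _ _
  refine ((hasStrictFDerivAt_eval_mvPolynomial p _).comp z hchart).congr_fderiv ?_
  ext v
  simp [Fintype.sum_sigma, Fin.sum_univ_succ]

theorem isInvertible_of_eval_jacobian_ne_zero [DecidableEq ι] [CompleteSpace 𝕜]
    {F : AffineIndex n → MvPolynomial (ProjIndex n) 𝕜} {z : AffineIndex n → 𝕜}
    (hdet : eval (consBlocks 1 z) (jacobian F) ≠ 0) :
    (ContinuousLinearMap.pi fun k => ∑ b : AffineIndex n,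
      eval (consBlocks 1 z) (pderiv ⟨b.1, b.2.succ⟩ (F k)) •
        (ContinuousLinearMap.proj b : (AffineIndex n → 𝕜) →L[𝕜] 𝕜)).IsInvertible := by
  rw [eval_jacobian] at hdet
  simp only [consBlocks_zero, one_mul] at hdet
  set M := Matrix.of fun k b : AffineIndex n =>
    eval (consBlocks 1 z) (pderiv ⟨b.1, b.2.succ⟩ (F k))
  refine ⟨(Matrix.toLinearEquiv' M (M.invertibleOfIsUnitDet
    (isUnit_iff_ne_zero.2 hdet))).toContinuousLinearEquiv, ?_⟩
  ext v k
  change (M.mulVec v) k = _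
  simp [M, Matrix.mulVec, dotProduct]

theorem hasInvertiblePartialDeriv_deform [DecidableEq ι] [CompleteSpace 𝕜]
    {G F : AffineIndex n → MvPolynomial (ProjIndex n) 𝕜} {t : 𝕜} {z : AffineIndex n → 𝕜}
    (hdet : eval (consBlocks 1 z) (jacobian (deform G F t)) ≠ 0) :
    HasInvertiblePartialDeriv 𝕜 (fun (q : 𝕜 × (AffineIndex n → 𝕜)) k =>
      eval (consBlocks 1 q.2) (deform G F q.1 k)) (t, z) := by
  have hpoly (p : MvPolynomial (ProjIndex n) 𝕜) : ∃ L, HasStrictFDerivAt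
      (fun q : 𝕜 × (AffineIndex n → 𝕜) => eval (consBlocks 1 q.2) p) L (t, z) :=
    ⟨_, HasStrictFDerivAt.comp (g := fun z => eval (consBlocks 1 z) p) (f := Prod.snd) (t, z)
      (hasStrictFDerivAt_eval_consBlocks_one p z) hasStrictFDerivAt_snd⟩
  choose L hL using hpoly
  obtain ⟨L', hL'⟩ : ∃ L', HasStrictFDerivAt (fun (q : 𝕜 × (AffineIndex n → 𝕜)) k =>
      eval (consBlocks 1 q.2) (deform G F q.1 k)) L' (t, z) := by
    simp only [eval_deform]
    exact ⟨_, hasStrictFDerivAt_pi.2 fun k =>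
      (hL (G k)).fun_add (hasStrictFDerivAt_fst.fun_mul ((hL (F k)).fun_sub (hL (G k))))⟩
  refine ⟨L', hL', ?_⟩
  have hpartial := hL'.hasFDerivAt.comp z (hasFDerivAt_prodMk_right t z)
  rw [hpartial.unique (hasFDerivAt_pi.2 fun k =>
    (hasStrictFDerivAt_eval_consBlocks_one (deform G F t k) z).hasFDerivAt)]
  exact isInvertible_of_eval_jacobian_ne_zero hdet

variable [DecidableEq ι] {d : AffineIndex n → ι → ℕ}

theorem exists_isCompact_eventually_affineZeros_deform_subset {𝕜 : Type*} [RCLike 𝕜]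
    {G F : AffineIndex n → MvPolynomial (ProjIndex n) 𝕜} (hG : IsMultihomogeneous G d)
    (hF : IsMultihomogeneous F d) {t₀ : 𝕜} (h : ∀ᶠ t in 𝓝 t₀, Nondegenerate (deform G F t)) :
    ∃ C, IsCompact C ∧ ∀ᶠ t in 𝓝 t₀, affineZeros (deform G F t) ⊆ C := by
  obtain ⟨T, hT, hT_nondeg, hT_compact⟩ := local_compact_nhds h
  let zeros : Set (𝕜 × (ProjIndex n → 𝕜)) :=
    (T ×ˢ sphereProduct n 𝕜) ∩ {q | ∀ k, eval q.2 (deform G F q.1 k) = 0}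
  have hzeros : IsCompact zeros := (hT_compact.prod isCompact_sphereProduct).inter_right
    (isClosed_setOf_eval_deform_eq_zero G F)
  refine ⟨(fun q => affineCoords q.2) '' zeros, hzeros.image_of_continuousOn ?_, ?_⟩
  · refine continuousOn_pi.2 fun b => ContinuousOn.div (by fun_prop) (by fun_prop) ?_
    rintro ⟨t, x⟩ ⟨⟨ht, hx⟩, hzero⟩
    have hx' := blockNonzero_of_mem_sphereProduct hx
    exact leading_ne_zero_of_eval_jacobian_ne_zero hx' (hT_nondeg ht x hx' hzero) _
  · filter_upwards [hT] with t ht z hz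
    obtain ⟨c, hc, hmem⟩ := exists_mul_mem_sphereProduct (blockNonzero_consBlocks_one z)
    refine ⟨(t, _), ⟨⟨ht, hmem⟩, fun k => ?_⟩, affineCoords_mul_consBlocks_one hc z⟩
    rw [eval_mul_block (isMultihomogeneous_deform hG hF t k), hz k, mul_zero]

theorem ncard_affineZeros_eq_of_nondegenerate
    {G F : AffineIndex n → MvPolynomial (ProjIndex n) ℂ} (hG : IsMultihomogeneous G d)
    (hF : IsMultihomogeneous F d) (hG₀ : Nondegenerate G) (hF₀ : Nondegenerate F) :
    (affineZeros G).ncard = (affineZeros F).ncard := by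
  let Φ (q : ℂ × (AffineIndex n → ℂ)) (k) : ℂ := eval (consBlocks 1 q.2) (deform G F q.1 k)
  have hchart : Continuous fun q : ℂ × (AffineIndex n → ℂ) => (q.1, consBlocks 1 q.2) :=
    continuous_fst.prodMk (continuous_consBlocks_one.comp continuous_snd)
  have hΦ : Continuous Φ := continuous_pi fun k => by
    simpa only [Function.comp_def] using (continuous_eval_deform G F k).comp hchart
  have hΦ_zeros (t) : {z | Φ (t, z) = 0} = affineZeros (deform G F t) := by
    ext z
    exact _root_.funext_iff
  have hbad := finite_setOf_not_nondegenerate_deform hG hF hG₀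
  have hconn : IsPreconnected {t | Nondegenerate (deform G F t)} := by
    have := hbad.countable.isPathConnected_compl_of_one_lt_rank (by simp)
    simpa [Set.compl_ofPred] using this.isConnected.isPreconnected
  have hd (t) (ht : Nondegenerate (deform G F t)) (z) (hz : Φ (t, z) = 0) :
      HasInvertiblePartialDeriv ℂ Φ (t, z) :=
    hasInvertiblePartialDeriv_deform (ht _ (blockNonzero_consBlocks_one z) (congrFun hz))
  have hproper (t₀) (ht₀ : Nondegenerate (deform G F t₀)) :
      ∃ C, IsCompact C ∧ ∀ᶠ t in 𝓝 t₀, {z | Φ (t, z) = 0} ⊆ C := by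
    simp only [hΦ_zeros]
    refine exists_isCompact_eventually_affineZeros_deform_subset hG hF ?_
    filter_upwards [hbad.isClosed.isOpen_compl.mem_nhds (not_not.2 ht₀)] with t ht
    exact not_not.1 ht
  have hzero : Nondegenerate (deform G F 0) := by rwa [deform_zero]
  have hone : Nondegenerate (deform G F 1) := by rwa [deform_one]
  have hcount := ncard_zeros_eq_of_isPreconnected hΦ hconn hd hproper (a := 0) (b := 1)
    hzero hone
  simpa only [hΦ_zeros, deform_zero, deform_one] using hcount

theorem exists_injective_ne_zero (α K : Type*) [Finite α] [DivisionRing K] [CharZero K] :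
    ∃ c : α → K, c.Injective ∧ ∀ q, c q ≠ 0 := by
  refine ⟨fun q => (Finite.equivFin α q : ℕ) + 1, fun q q' h => ?_,
    fun q => Nat.cast_add_one_ne_zero _⟩
  simpa [Fin.val_inj] using h

theorem ncard_affineZeros_eq_bezoutNumber {F : AffineIndex n → MvPolynomial (ProjIndex n) ℂ}
    (hF : IsMultihomogeneous F d) (hF₀ : Nondegenerate F) :
    (affineZeros F).ncard = bezoutNumber n d := by
  obtain ⟨c, hc, hc₀⟩ := exists_injective_ne_zero (FactorIndex d) ℂ
  rw [← ncard_affineZeros_splitSystem hc hc₀]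
  exact ncard_affineZeros_eq_of_nondegenerate hF (isWeightedHomogeneous_splitSystem c) hF₀
    (nondegenerate_splitSystem hc hc₀)

end CountingZeros

section RealZeros

open MvPolynomial

variable {ι : Type*} {n : ι → ℕ}

theorem eval_ofReal_map {σ : Type*} (x : σ → ℝ) (p : MvPolynomial σ ℝ) :
    eval (fun i => (x i : ℂ)) (map Complex.ofRealHom p) = eval x p := by
  rw [eval_map]
  exact (eval₂_comp_left Complex.ofRealHom (RingHom.id ℝ) x p).symm

theorem eval_conj_map_ofReal {σ : Type*} (x : σ → ℂ) (p : MvPolynomial σ ℝ) :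
    eval (fun i => starRingEnd ℂ (x i)) (map Complex.ofRealHom p) =
      starRingEnd ℂ (eval x (map Complex.ofRealHom p)) := by
  have hconj : (starRingEnd ℂ).comp Complex.ofRealHom = Complex.ofRealHom := by ext1; simp
  rw [eval_map, eval_map, eval₂_comp_left, hconj]
  rfl

theorem map_consBlocks_one {R S : Type*} [CommRing R] [CommRing S] (f : R →+* S)
    (z : AffineIndex n → R) :
    (fun a => f (consBlocks 1 z a)) = consBlocks 1 fun b => f (z b) := by
  ext ⟨l, i⟩
  cases i using Fin.cases <;> simp

/-- Complex conjugation is an involution of the complex zeros, so it fixes one of them. -/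
theorem affineZeros_nonempty_of_odd_ncard {F : AffineIndex n → MvPolynomial (ProjIndex n) ℝ}
    (hodd : Odd (affineZeros fun k => map Complex.ofRealHom (F k)).ncard) :
    (affineZeros F).Nonempty := by
  set S := affineZeros fun k => map Complex.ofRealHom (F k)
  have hS : S.Finite := Set.finite_of_ncard_pos hodd.pos
  have := hS.fintype
  have hconj (z : AffineIndex n → ℂ) (hz : z ∈ S) : (fun b => starRingEnd ℂ (z b)) ∈ S := by
    intro k
    rw [← map_consBlocks_one, eval_conj_map_ofReal, hz k, map_zero]
  have hinv : Function.Involutive fun z : S => (⟨_, hconj z z.2⟩ : S) :=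
    fun z => Subtype.ext (funext fun b => Complex.conj_conj _)
  obtain ⟨z, hz⟩ := Equiv.Perm.exists_fixed_point_of_prime (p := 2) (n := 1) (σ := hinv.toPerm)
    (by rwa [← Nat.card_eq_fintype_card, Nat.card_coe_set_eq, ← even_iff_two_dvd,
      Nat.not_even_iff_odd]) (Equiv.ext fun z => hinv z)
  have hreal (b : AffineIndex n) : ((z.1 b).re : ℂ) = z.1 b :=
    Complex.conj_eq_iff_re.1 (congrFun (congrArg Subtype.val hz) b)
  refine ⟨fun b => (z.1 b).re, fun k => Complex.ofReal_injective ?_⟩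
  have hlift := map_consBlocks_one Complex.ofRealHom fun b => (z.1 b).re
  simp only [Complex.ofRealHom_eq_coe, hreal] at hlift
  rw [← eval_ofReal_map, hlift, Complex.ofReal_zero]
  exact z.2 k

variable [Fintype ι] [DecidableEq ι] {d : AffineIndex n → ι → ℕ}

theorem exists_mem_sphereProduct_zero_of_nondegenerate
    {F : AffineIndex n → MvPolynomial (ProjIndex n) ℝ} (hF : IsMultihomogeneous F d)
    (hF₀ : Nondegenerate fun k => map Complex.ofRealHom (F k)) (hd : Odd (bezoutNumber n d)) :
    ∃ x ∈ sphereProduct n ℝ, ∀ k, eval x (F k) = 0 := by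
  rw [← ncard_affineZeros_eq_bezoutNumber (fun k => isWeightedHomogeneous_map _ (hF k)) hF₀] at hd
  obtain ⟨z, hz⟩ := affineZeros_nonempty_of_odd_ncard hd
  exact exists_mem_sphereProduct_forall_eval_eq_zero hF (blockNonzero_consBlocks_one z) hz

/-- Systems close to `F` on the line to a split system are nondegenerate, and their zeros on the
compact product of spheres accumulate at a zero of `F`. -/
theorem exists_mem_sphereProduct_zero_of_odd_bezoutNumber
    {F : AffineIndex n → MvPolynomial (ProjIndex n) ℝ} (hF : IsMultihomogeneous F d)
    (hd : Odd (bezoutNumber n d)) : ∃ x ∈ sphereProduct n ℝ, ∀ k, eval x (F k) = 0 := by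
  obtain ⟨c, hc, hc₀⟩ := exists_injective_ne_zero (FactorIndex d) ℝ
  let good : Set ℝ :=
    {t | Nondegenerate fun k => map Complex.ofRealHom (deform (splitSystem c) F t k)}
  have hgood : Dense good := by
    have hbad : {t | ¬ Nondegenerate (deform (splitSystem fun q => (c q : ℂ))
        (fun k => map Complex.ofRealHom (F k)) t)}.Finite := finite_setOf_not_nondegenerate_deform
      (isWeightedHomogeneous_splitSystem _) (fun k => isWeightedHomogeneous_map _ (hF k))
      (nondegenerate_splitSystem (Complex.ofReal_injective.comp hc)
        fun q => Complex.ofReal_ne_zero.2 (hc₀ q))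
    convert (hbad.preimage Complex.ofReal_injective.injOn).countable.dense_compl ℝ using 1
    ext t
    simp [good, map_deform, map_splitSystem]
  let zeroTimes : Set ℝ :=
    {t | ∃ x ∈ sphereProduct n ℝ, ∀ k, eval x (deform (splitSystem c) F t k) = 0}
  have hclosed : IsClosed zeroTimes := by
    have := isCompact_iff_compactSpace.1 (isCompact_sphereProduct (n := n) (𝕜 := ℝ))
    convert isClosedMap_fst_of_compactSpace (Y := sphereProduct n ℝ) _
      ((isClosed_setOf_eval_deform_eq_zero (splitSystem c) F).preimage
        (continuous_fst.prodMk (continuous_subtype_val.comp continuous_snd))) using 1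
    ext t
    simp [zeroTimes]
  have hone : (1 : ℝ) ∈ zeroTimes := hclosed.closure_subset_iff.2 (fun t ht =>
    exists_mem_sphereProduct_zero_of_nondegenerate (isMultihomogeneous_deform
      (isWeightedHomogeneous_splitSystem c) hF t) ht hd) (hgood 1)
  simpa [zeroTimes] using hone

end RealZeros

section SignCharacters

open scoped BigOperators

theorem addChar_map_sum_eq_prod {κ A M : Type*} [AddCommMonoid A] [CommMonoid M] (ψ : AddChar A M)
    (s : Finset κ) (f : κ → A) : ψ (∑ i ∈ s, f i) = ∏ i ∈ s, ψ (f i) :=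
  map_prod ψ.toMonoidHom (fun i => Multiplicative.ofAdd (f i)) s

variable {ι : Type*} [Fintype ι]

/-- The nontrivial real character `u ↦ (-1) ^ u` of `ℤ/2`. -/
noncomputable def paritySign : AddChar (ZMod 2) ℝ := AddChar.zmodChar 2 neg_one_sq

theorem paritySign_eq_ite (u : ZMod 2) : paritySign u = if u = 0 then 1 else -1 := by
  obtain rfl | rfl : u = 0 ∨ u = 1 := by decide +revert
  · rw [AddChar.map_zero_eq_one, if_pos rfl]
  · rw [paritySign, AddChar.zmodChar_apply, ZMod.val_one, pow_one, if_neg one_ne_zero]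

/-- The real character `g ↦ (-1) ^ ⟨χ, g⟩` of `(ℤ/2)^ι`. -/
noncomputable def signChar (χ : ι → ZMod 2) : AddChar (ι → ZMod 2) ℝ where
  toFun g := paritySign (χ ⬝ᵥ g)
  map_zero_eq_one' := by rw [dotProduct_zero, AddChar.map_zero_eq_one]
  map_add_eq_mul' g h := by rw [dotProduct_add, AddChar.map_add_eq_mul]

theorem signChar_apply (χ g : ι → ZMod 2) : signChar χ g = paritySign (χ ⬝ᵥ g) := rfl

theorem signChar_comm (χ g : ι → ZMod 2) : signChar χ g = signChar g χ := by
  rw [signChar_apply, dotProduct_comm, signChar_apply]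

theorem signChar_add_left (χ ψ g : ι → ZMod 2) :
    signChar (χ + ψ) g = signChar χ g * signChar ψ g := by
  rw [signChar_comm, AddChar.map_add_eq_mul, signChar_comm g, signChar_comm g]

theorem abs_signChar (χ g : ι → ZMod 2) : |signChar χ g| = 1 := by
  rw [signChar_apply, paritySign_eq_ite]
  split_ifs <;> simp

theorem signChar_mul_self (χ g : ι → ZMod 2) : signChar χ g * signChar χ g = 1 := by
  rw [← abs_mul_abs_self, abs_signChar, one_mul]

theorem signChar_eq_zero_iff {χ : ι → ZMod 2} : signChar χ = 0 ↔ χ = 0 := by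
  classical
  refine ⟨fun h => funext fun l => ?_, fun h => by ext g; simp [h, signChar_apply]⟩
  have hl : paritySign (χ l) = 1 := by
    simpa [signChar_apply] using DFunLike.congr_fun h (Pi.single l 1)
  rw [paritySign_eq_ite] at hl
  split_ifs at hl with hχ
  · exact hχ
  · norm_num at hl

variable [DecidableEq ι]

theorem sum_signChar_mul_comp_add (χ g : ι → ZMod 2) (v : (ι → ZMod 2) → ℝ) :
    ∑ α, signChar χ α * v (g + α) = signChar χ g * ∑ α, signChar χ α * v α := by
  rw [← Equiv.sum_comp (Equiv.addLeft g) fun α => signChar χ α * v α, Finset.mul_sum]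
  refine Finset.sum_congr rfl fun α _ => ?_
  rw [Equiv.coe_addLeft, AddChar.map_add_eq_mul, ← mul_assoc, ← mul_assoc, signChar_mul_self,
    one_mul]

theorem expect_signChar_mul_signChar (χ ψ : ι → ZMod 2) :
    𝔼 g, signChar χ g * signChar ψ g = if χ = ψ then 1 else 0 := by
  have hadd : χ + ψ = 0 ↔ χ = ψ := by simp [funext_iff, CharTwo.add_eq_zero]
  simp only [← signChar_add_left, AddChar.expect_eq_ite, signChar_eq_zero_iff, hadd]

theorem eq_zero_of_forall_sum_signChar_mul_eq_zero {v : (ι → ZMod 2) → ℝ}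
    (hv : ∀ χ, ∑ α, signChar χ α * v α = 0) : v = 0 := by
  ext β
  have hinversion : 𝔼 χ, signChar χ β * ∑ α, signChar χ α * v α = v β := by
    have hswap (χ : ι → ZMod 2) : signChar χ β * ∑ α, signChar χ α * v α =
        ∑ α, signChar β χ * signChar α χ * v α := by
      rw [Finset.mul_sum]
      exact Finset.sum_congr rfl fun α _ => by
        rw [signChar_comm χ β, signChar_comm χ α, mul_assoc]
    simp only [hswap]
    rw [Finset.expect_sum_comm]
    simp [← Finset.expect_mul, expect_signChar_mul_signChar]
  simpa [hv] using hinversion.symm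

end SignCharacters

section EquivariantApproximation

open MvPolynomial
open scoped BigOperators

variable {ι : Type*} {n : ι → ℕ}

/-- The action of `(ℤ/2)^ι` on a product of spheres in which the generator with index `l` is the
antipodal map of the `l`-th factor. -/
noncomputable def flipSigns (g : ι → ZMod 2) (x : sphereProduct n ℝ) : sphereProduct n ℝ :=
  ⟨fun a => paritySign (g a.1) * x.1 a, fun l => by
    have habs : ‖paritySign (g l)‖ = 1 := by
      rw [paritySign_eq_ite]
      split_ifs <;> simp
    simpa [habs] using x.2 l⟩

theorem coe_flipSigns (g : ι → ZMod 2) (x : sphereProduct n ℝ) :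
    (flipSigns g x).1 = fun a => paritySign (g a.1) * x.1 a := rfl

theorem exists_eq_add_two_nsmul {d e : ι → ℕ} (hde : d ≤ e)
    (hmod : ∀ l, (d l : ZMod 2) = e l) : ∃ r : ι → ℕ, e = d + 2 • r := by
  have hdvd (l : ι) : 2 ∣ e l - d l :=
    (Nat.modEq_iff_dvd' (hde l)).1 ((ZMod.natCast_eq_natCast_iff _ _ _).1 (hmod l))
  choose r hr using hdvd
  refine ⟨r, funext fun l => ?_⟩
  rw [Pi.add_apply, Pi.smul_apply, smul_eq_mul, ← hr, add_tsub_cancel_of_le (hde l)]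

theorem exists_mvPolynomial_near [Finite ι] {f : sphereProduct n ℝ → ℝ} (hf : Continuous f) {ε : ℝ}
    (hε : 0 < ε) :
    ∃ P : MvPolynomial (ProjIndex n) ℝ, ∀ x : sphereProduct n ℝ, |eval x.1 P - f x| < ε := by
  have : CompactSpace (sphereProduct n ℝ) := isCompact_iff_compactSpace.1 isCompact_sphereProduct
  let coord (a : ProjIndex n) : C(sphereProduct n ℝ, ℝ) :=
    ⟨fun x => x.1 a, (continuous_apply a).comp continuous_subtype_val⟩
  have hseparates : (aeval (R := ℝ) coord).range.SeparatesPoints := by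
    intro x y hxy
    obtain ⟨a, ha⟩ := Function.ne_iff.1 (Subtype.coe_injective.ne hxy)
    exact ⟨coord a, ⟨coord a, ⟨X a, by simp⟩, rfl⟩, ha⟩
  obtain ⟨⟨_, P, rfl⟩, hP⟩ :=
    ContinuousMap.exists_mem_subalgebra_near_continuous_of_separatesPoints _ hseparates f hf ε hε
  refine ⟨P, fun x => ?_⟩
  have heval : (ContinuousMap.evalAlgHom ℝ ℝ x).comp (aeval coord) = aeval x.1 := by
    ext a
    simp [coord]
  have heval_P : aeval coord P x = eval x.1 P := by
    simpa [coe_aeval_eq_eval] using DFunLike.congr_fun heval P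
  simpa [heval_P] using hP x

variable [Fintype ι] [DecidableEq ι]

theorem eval_flipSigns {p : MvPolynomial (ProjIndex n) ℝ} {e : ι → ℕ}
    (hp : IsWeightedHomogeneous (blockWeight fun l => Fin (n l + 1)) p e) (g : ι → ZMod 2)
    (x : sphereProduct n ℝ) :
    eval (flipSigns g x).1 p = signChar (fun l => (e l : ZMod 2)) g * eval x.1 p := by
  have hsign : ∏ l, paritySign (g l) ^ e l = signChar (fun l => (e l : ZMod 2)) g := by
    simp only [signChar_apply, dotProduct, addChar_map_sum_eq_prod, ← nsmul_eq_mul,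
      AddChar.map_nsmul_eq_pow]
  rw [← hsign, coe_flipSigns, eval_mul_block hp fun l => paritySign (g l)]

theorem exists_isWeightedHomogeneous_raise {p : MvPolynomial (ProjIndex n) ℝ} {d : ι → ℕ}
    (hp : IsWeightedHomogeneous (blockWeight fun l => Fin (n l + 1)) p d) (r : ι → ℕ) :
    ∃ q, IsWeightedHomogeneous (blockWeight fun l => Fin (n l + 1)) q (d + 2 • r) ∧
      ∀ x ∈ sphereProduct n ℝ, eval x q = eval x p := by
  let normSq (l : ι) : MvPolynomial (ProjIndex n) ℝ := ∑ i, X ⟨l, i⟩ ^ 2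
  have hnormSq (l : ι) : IsWeightedHomogeneous (blockWeight fun l => Fin (n l + 1)) (normSq l)
      (2 • Pi.single l 1) :=
    IsWeightedHomogeneous.sum _ _ _ fun i _ => (isWeightedHomogeneous_X ℝ _ _).pow 2
  have hdeg : ∑ l, r l • 2 • Pi.single l 1 = 2 • r := by
    ext l
    simp [Finset.sum_apply, Pi.single_apply, mul_comm]
  refine ⟨p * ∏ l, normSq l ^ r l, hdeg ▸ hp.mul
    (IsWeightedHomogeneous.prod _ _ _ fun l _ => (hnormSq l).pow (r l)), fun x hx => ?_⟩
  have hone (l : ι) : eval x (normSq l) = 1 := by simpa [normSq] using hx l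
  simp [hone]

theorem exists_isWeightedHomogeneous_add {p q : MvPolynomial (ProjIndex n) ℝ} {d e : ι → ℕ}
    {χ : ι → ZMod 2} (hp : IsWeightedHomogeneous (blockWeight fun l => Fin (n l + 1)) p d)
    (hq : IsWeightedHomogeneous (blockWeight fun l => Fin (n l + 1)) q e)
    (hd : ∀ l, (d l : ZMod 2) = χ l) (he : ∀ l, (e l : ZMod 2) = χ l) :
    ∃ (m : ι → ℕ) (F : MvPolynomial (ProjIndex n) ℝ), (∀ l, (m l : ZMod 2) = χ l) ∧
      IsWeightedHomogeneous (blockWeight fun l => Fin (n l + 1)) F m ∧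
      ∀ x ∈ sphereProduct n ℝ, eval x F = eval x p + eval x q := by
  have hmax (l : ι) : (((d ⊔ e) l : ℕ) : ZMod 2) = χ l := by
    rcases max_choice (d l) (e l) with h | h <;> simp [h, hd, he]
  obtain ⟨r, hr⟩ := exists_eq_add_two_nsmul le_sup_left fun l => (hd l).trans (hmax l).symm
  obtain ⟨t, ht⟩ := exists_eq_add_two_nsmul le_sup_right fun l => (he l).trans (hmax l).symm
  obtain ⟨p', hp', hp'_eval⟩ := exists_isWeightedHomogeneous_raise hp r
  obtain ⟨q', hq', hq'_eval⟩ := exists_isWeightedHomogeneous_raise hq t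
  refine ⟨d ⊔ e, p' + q', hmax, (hr ▸ hp').add (ht ▸ hq'), fun x hx => ?_⟩
  rw [map_add, hp'_eval x hx, hq'_eval x hx]

theorem exists_isWeightedHomogeneous_average (χ : ι → ZMod 2) (P : MvPolynomial (ProjIndex n) ℝ) :
    ∃ (d : ι → ℕ) (F : MvPolynomial (ProjIndex n) ℝ), (∀ l, (d l : ZMod 2) = χ l) ∧
      IsWeightedHomogeneous (blockWeight fun l => Fin (n l + 1)) F d ∧
      ∀ x : sphereProduct n ℝ, eval x.1 F = 𝔼 g, signChar χ g * eval (flipSigns g x).1 P := by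
  induction P using MvPolynomial.induction_on' with
  | monomial m a =>
    have hm : IsWeightedHomogeneous (blockWeight fun l => Fin (n l + 1)) (monomial m a) _ :=
      isWeightedHomogeneous_monomial _ m a rfl
    simp only [eval_flipSigns hm, ← mul_assoc, ← Finset.expect_mul, expect_signChar_mul_signChar]
    by_cases hχ : χ = fun l => (Finsupp.weight (blockWeight fun l => Fin (n l + 1)) m l : ZMod 2)
    · exact ⟨_, monomial m a, fun l => (congrFun hχ l).symm, hm, fun x => by simp [if_pos hχ]⟩
    · exact ⟨fun l => (χ l).val, 0, fun l => ZMod.natCast_zmod_val _,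
        isWeightedHomogeneous_zero _ _ _, fun x => by simp [if_neg hχ]⟩
  | add p q hp hq =>
    obtain ⟨d, F, hd, hF, hF_eval⟩ := hp
    obtain ⟨e, G, he, hG, hG_eval⟩ := hq
    obtain ⟨m, H, hm, hH, hH_eval⟩ := exists_isWeightedHomogeneous_add hF hG hd he
    refine ⟨m, H, hm, hH, fun x => ?_⟩
    simp only [hH_eval x x.2, hF_eval, hG_eval, map_add, mul_add, Finset.expect_add_distrib]

theorem exists_isWeightedHomogeneous_near {χ : ι → ZMod 2} {f : sphereProduct n ℝ → ℝ}
    (hf : Continuous f) (hχ : ∀ g x, f (flipSigns g x) = signChar χ g * f x) {ε : ℝ}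
    (hε : 0 < ε) :
    ∃ (d : ι → ℕ) (F : MvPolynomial (ProjIndex n) ℝ), (∀ l, (d l : ZMod 2) = χ l) ∧
      IsWeightedHomogeneous (blockWeight fun l => Fin (n l + 1)) F d ∧
      ∀ x : sphereProduct n ℝ, |eval x.1 F - f x| ≤ ε := by
  obtain ⟨P, hP⟩ := exists_mvPolynomial_near hf hε
  obtain ⟨d, F, hd, hF, hF_eval⟩ := exists_isWeightedHomogeneous_average χ P
  refine ⟨d, F, hd, hF, fun x => ?_⟩
  have hfx : f x = 𝔼 g, signChar χ g * f (flipSigns g x) := by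
    simp [hχ, ← mul_assoc, signChar_mul_self]
  rw [hF_eval, hfx, ← Finset.expect_sub_distrib]
  refine (Finset.abs_expect_le _ _).trans (Finset.expect_le Finset.univ_nonempty fun g _ => ?_)
  rw [← mul_sub, abs_mul, abs_signChar, one_mul]
  exact (hP _).le

end EquivariantApproximation

section BorsukUlam

variable {ι : Type*} [Fintype ι] [DecidableEq ι] {n : ι → ℕ}

theorem exists_forall_eq_zero_of_bezoutNumber_ne_zero {χ : AffineIndex n → ι → ZMod 2}
    (hχ : bezoutNumber n χ ≠ 0) {h : AffineIndex n → sphereProduct n ℝ → ℝ}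
    (hcont : ∀ k, Continuous (h k))
    (hequiv : ∀ k g x, h k (flipSigns g x) = signChar (χ k) g * h k x) :
    ∃ x, ∀ k, h k x = 0 := by
  let H (x : sphereProduct n ℝ) (k : AffineIndex n) : ℝ := h k x
  have happrox {ε : ℝ} (hε : 0 < ε) : ∃ x, ‖H x‖ ≤ ε := by
    choose d F hd hF hnear using fun k =>
      exists_isWeightedHomogeneous_near (hcont k) (hequiv k) hε
    have hodd : Odd (bezoutNumber n d) := by
      rw [← ZMod.natCast_ne_zero_iff_odd, ← Nat.coe_castRingHom, map_bezoutNumber]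
      simpa only [Nat.coe_castRingHom, hd] using hχ
    obtain ⟨x, hx, hzero⟩ := exists_mem_sphereProduct_zero_of_odd_bezoutNumber hF hodd
    refine ⟨⟨x, hx⟩, (pi_norm_le_iff_of_nonneg hε.le).2 fun k => ?_⟩
    simpa [hzero k] using hnear k ⟨x, hx⟩
  have : CompactSpace (sphereProduct n ℝ) := isCompact_iff_compactSpace.1 isCompact_sphereProduct
  obtain ⟨x₁, -⟩ := happrox one_pos
  obtain ⟨x, -, hmin⟩ := isCompact_univ.exists_isMinOn ⟨x₁, Set.mem_univ x₁⟩
    (continuous_pi hcont).norm.continuousOn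
  have hH : ‖H x‖ ≤ 0 := le_of_forall_pos_le_add fun ε hε => by
    obtain ⟨y, hy⟩ := happrox hε
    simpa using (hmin (Set.mem_univ y)).trans hy
  exact ⟨x, congrFun (norm_le_zero_iff.1 hH)⟩

end BorsukUlam

section LeadingCharacters

variable {ι : Type*} [LinearOrder ι]

/-- The element of `(ℤ/2)^ι` whose last nonzero entry has index `l` and whose entries before `l`
are given by `w`. -/
def withLeading (l : ι) (w : Set.Iio l → ZMod 2) (m : ι) : ZMod 2 :=
  if h : m < l then w ⟨m, h⟩ else if m = l then 1 else 0

theorem withLeading_self (l : ι) (w : Set.Iio l → ZMod 2) : withLeading l w l = 1 := by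
  simp [withLeading]

theorem withLeading_of_lt {l m : ι} (w : Set.Iio l → ZMod 2) (hlm : l < m) :
    withLeading l w m = 0 := by
  simp [withLeading, hlm.not_gt, hlm.ne']

theorem exists_withLeading_eq [Finite ι] {χ : ι → ZMod 2} (hχ : χ ≠ 0) :
    ∃ l w, withLeading l w = χ := by
  obtain ⟨l, hl, hmax⟩ := (Set.toFinite χ.support).exists_maximalFor id _
    (Function.support_nonempty_iff.2 hχ)
  refine ⟨l, fun m => χ m, funext fun m => ?_⟩
  rcases lt_trichotomy m l with hlt | rfl | hgt
  · simp [withLeading, hlt]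
  · have hone : ∀ u : ZMod 2, u ≠ 0 → u = 1 := by decide
    rw [withLeading_self, hone _ hl]
  · rw [withLeading_of_lt _ hgt]
    by_contra hne
    exact hgt.not_ge (hmax (Ne.symm hne) hgt.le)

end LeadingCharacters

section Components

variable {s j : ℕ}

/-- The dimensions of the spheres in `SphereProd s j`. -/
abbrev sphereDim (s j : ℕ) (l : Fin s) : ℕ := j * 2 ^ (l : ℕ)

/-- The `l`-th sphere has as many affine coordinates as there are pairs consisting of one of the
`j` copies of `U_s` and a nontrivial character with last nonzero entry at `l`. -/
noncomputable def sphereIndexEquiv (l : Fin s) :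
    Fin (sphereDim s j l) ≃ Fin j × (Set.Iio l → ZMod 2) :=
  Fintype.equivOfCardEq (by simp)

/-- The copy of `U_s` containing the component of `U_s^{⊕j}` with index `k`. -/
noncomputable def componentCopy (k : AffineIndex (sphereDim s j)) : Fin j :=
  (sphereIndexEquiv k.1 k.2).1

/-- The character by which `(ℤ/2)^s` acts on the component of `U_s^{⊕j}` with index `k`. -/
noncomputable def componentChar (k : AffineIndex (sphereDim s j)) : Fin s → ZMod 2 :=
  withLeading k.1 (sphereIndexEquiv k.1 k.2).2

theorem exists_componentCopy_eq_componentChar_eq (i : Fin j) {χ : Fin s → ZMod 2} (hχ : χ ≠ 0) :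
    ∃ k : AffineIndex (sphereDim s j), componentCopy k = i ∧ componentChar k = χ := by
  obtain ⟨l, w, rfl⟩ := exists_withLeading_eq hχ
  exact ⟨⟨l, (sphereIndexEquiv l).symm (i, w)⟩, by simp [componentCopy], by simp [componentChar]⟩

theorem bezoutNumber_componentChar (s j : ℕ) :
    bezoutNumber (sphereDim s j) (componentChar (s := s) (j := j)) = 1 := by
  have htriangular (k : AffineIndex (sphereDim s j)) (l) (hkl : k.1 < l) : componentChar k l = 0 :=
    withLeading_of_lt _ hkl
  rw [bezoutNumber_eq_prod_of_triangular htriangular]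
  exact Finset.prod_eq_one fun k _ => withLeading_self _ _

/-- A point of the product of spheres in concatenated coordinates, as a point of
`SphereProd s j`. -/
noncomputable def toSphereProd (x : sphereProduct (sphereDim s j) ℝ) : SphereProd s j :=
  ⟨fun l => WithLp.toLp 2 fun i => x.1 ⟨l, i⟩, fun l => by
    rw [EuclideanSpace.norm_eq, x.2 l, Real.sqrt_one]⟩

theorem continuous_toSphereProd : Continuous (toSphereProd (s := s) (j := j)) := by
  refine Continuous.subtype_mk (continuous_pi fun l => (PiLp.continuous_toLp 2 _).comp ?_) _
  exact continuous_pi fun i => (continuous_apply _).comp continuous_subtype_val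

theorem toSphereProd_flipSigns (g : Fin s → ZMod 2) (x : sphereProduct (sphereDim s j) ℝ)
    (l : Fin s) : (toSphereProd (flipSigns g x)).1 l =
      if g l = 0 then (toSphereProd x).1 l else -(toSphereProd x).1 l := by
  ext i
  simp only [toSphereProd, coe_flipSigns, paritySign_eq_ite]
  split_ifs <;> simp

end Components

end MultiprojectiveZeros

open MultiprojectiveZeros in
/-- **The Borsuk–Ulam-type theorem**: there is no continuous `(ℤ/2)ˢ`-equivariant map
`Y → S(U_s^{⊕j})`. Here the generator `ω_ℓ` of `G = (ℤ/2)ˢ` acts on `Y` by `p_ℓ ↦ −p_ℓ`,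
`U_s = {(y_α)_{α ∈ (ℤ/2)ˢ} : ∑_α y_α = 0} ⊆ ℝ^{(ℤ/2)ˢ}` carries the index-shift action
`(β·y)_α = y_{β+α}`, and `S(U_s^{⊕j})` is the unit sphere (sum of squares `= 1`) of
`U_s^{⊕j}` with the diagonal `G`-action. Equivariance is expressed pointwise: whenever
`z` is obtained from `y` by negating exactly the coordinates `ℓ` with `g ℓ ≠ 0`, then
`f z = g • f y`. -/
theorem no_equivariant_map_to_sphere (s j : ℕ) (hs : 1 ≤ s) (hj : 1 ≤ j) :
    ¬ ∃ f : SphereProd s j → (Fin j → (Fin s → ZMod 2) → ℝ),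
        Continuous f ∧
        (∀ y, (∀ i, ∑ α, f y i α = 0) ∧ ∑ i, ∑ α, (f y i α) ^ 2 = 1) ∧
        (∀ (g : Fin s → ZMod 2) (y z : SphereProd s j),
          (∀ ℓ, z.1 ℓ = if g ℓ = 0 then y.1 ℓ else -(y.1 ℓ)) →
          f z = fun i α => f y i (g + α)) := by
  rintro ⟨f, hf, hsphere, hequiv⟩
  let component (k : AffineIndex (sphereDim s j)) (x : sphereProduct (sphereDim s j) ℝ) : ℝ :=
    ∑ α, signChar (componentChar k) α * f (toSphereProd x) (componentCopy k) α
  have hcont (k) : Continuous (component k) := continuous_finsetSum _ fun α _ =>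
    continuous_const.mul ((continuous_apply_apply _ α).comp (hf.comp continuous_toSphereProd))
  have hcomponent (k g x) :
      component k (flipSigns g x) = signChar (componentChar k) g * component k x := by
    simp only [component, hequiv g _ _ (toSphereProd_flipSigns g x)]
    exact sum_signChar_mul_comp_add _ g _
  obtain ⟨x, hx⟩ := exists_forall_eq_zero_of_bezoutNumber_ne_zero
    (bezoutNumber_componentChar s j ▸ one_ne_zero) hcont hcomponent
  have hzero (i : Fin j) : f (toSphereProd x) i = 0 := by
    refine eq_zero_of_forall_sum_signChar_mul_eq_zero fun χ => ?_
    rcases eq_or_ne χ 0 with rfl | hχ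
    · simpa [signChar_apply] using (hsphere (toSphereProd x)).1 i
    · obtain ⟨k, rfl, rfl⟩ := exists_componentCopy_eq_componentChar_eq i hχ
      exact hx k
  simpa [hzero] using (hsphere (toSphereProd x)).2
end
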